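/- arXiv:2402.07712 — 6 statements merged into one kernel-verified Lean document; each statement's English description precedes it below -/
import Mathlib

section
/- Let d ≥ 1, n ≥ 1 and 1 ≤ T₀ ≤ d be integers, let X₀ be a T₀ × d random matrix with i.i.d. standard Gaussian entries, and let P₀ ∈ ℝ^{d×d} be the matrix of the orthogonal projection of ℝ^d onto the row span of X₀. In the noiseless fake-data generation process with identical design matrices across generations (X_m = X₀ for all m and zero label noise), the generation-n labelling vector is ŵ_n = P₀ w₀ for every n ≥ 1, and one has exactly E[‖ŵ_n‖²] = (T₀/d) ‖w₀‖² and E[‖ŵ_n − w₀‖²] = (1 − T₀/d) ‖w₀‖². In particular these quantities do not depend on n ≥ 1. -/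
/-!
Every generation applies `P = Xᵀ (X Xᵀ)⁻¹ X`, which is symmetric and idempotent, so all generations
`n ≥ 1` give `P w₀`, with `‖P w₀‖² = ⟨w₀, P w₀⟩` and `‖P w₀ - w₀‖² = ‖w₀‖² - ⟨w₀, P w₀⟩`. Everything
reduces to `E[P] = (T₀/d) I`.

Full rotational invariance is not needed for this. The law of a Gaussian row is invariant under sign
changes of single coordinates, which kills the off-diagonal entries of `E[P]`
(`integral_projRowMat_offDiag`), and under permutations of coordinates, which makes the diagonal
entries equal (`integral_projRowMat_diag_eq`). Their common value is found from the trace: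
`tr P = T₀` as soon as `X Xᵀ` is invertible, which holds almost surely since `T₀ ≤ d`
(`ae_det_gram_ne_zero`).
-/
open MeasureTheory ProbabilityTheory Matrix

noncomputable section

/-- Law of a `T × d` random matrix with i.i.d. standard Gaussian entries
(represented as a function `Fin T → Fin d → ℝ`). -/
def stdGaussMat (T d : ℕ) : Measure (Fin T → Fin d → ℝ) :=
  Measure.pi fun _ => Measure.pi fun _ => gaussianReal 0 1

/-- Moore–Penrose pseudoinverse of a full-row-rank matrix: `X† = Xᵀ (X Xᵀ)⁻¹`. -/
def pinvRow {T d : ℕ} (X : Matrix (Fin T) (Fin d) ℝ) : Matrix (Fin d) (Fin T) ℝ :=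
  Xᵀ * (X * Xᵀ)⁻¹

/-- Orthogonal projection matrix onto the row space of a full-row-rank matrix:
`P = X† X`. -/
def projRowMat {T d : ℕ} (X : Matrix (Fin T) (Fin d) ℝ) : Matrix (Fin d) (Fin d) ℝ :=
  pinvRow X * X

/-- The noiseless fake-data labelling vectors with identical design matrices
across generations: `ŵ₀ = w₀` and `ŵ_{m+1} = X₀† (X₀ ŵ_m)`. -/
def fakeNoiseless {d T0 : ℕ} (X : Matrix (Fin T0) (Fin d) ℝ) (w0 : Fin d → ℝ) :
    ℕ → Fin d → ℝ
  | 0 => w0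
  | m + 1 => pinvRow X *ᵥ (X *ᵥ fakeNoiseless X w0 m)

/-- An orthogonal change of coordinates `Q` on `ℝ^d` leaves the Gram matrix `X Xᵀ` unchanged, so it
conjugates the projection. -/
theorem projRowMat_orth {T d : ℕ} (X : Matrix (Fin T) (Fin d) ℝ) (Q : Matrix (Fin d) (Fin d) ℝ)
    (hQ : Q * Qᵀ = 1) : projRowMat (X * Q) = Qᵀ * projRowMat X * Q := by
  have hG : X * Q * (X * Q)ᵀ = X * Xᵀ := by
    rw [transpose_mul, Matrix.mul_assoc, ← Matrix.mul_assoc Q, hQ, Matrix.one_mul]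
  simp only [projRowMat, pinvRow, hG]
  simp only [transpose_mul, Matrix.mul_assoc]

/-- No rank assumption is needed: if `X Xᵀ` is singular, its `⁻¹` is `0` and both sides vanish. -/
theorem projRowMat_mul_self {T d : ℕ} (X : Matrix (Fin T) (Fin d) ℝ) :
    projRowMat X * projRowMat X = projRowMat X := by
  by_cases h : IsUnit (X * Xᵀ).det
  · calc projRowMat X * projRowMat X
        = Xᵀ * ((X * Xᵀ)⁻¹ * (X * Xᵀ)) * (X * Xᵀ)⁻¹ * X := by
          simp only [projRowMat, pinvRow, Matrix.mul_assoc]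
      _ = projRowMat X := by
          rw [Matrix.nonsing_inv_mul _ h, Matrix.mul_one]; rfl
  · simp [projRowMat, pinvRow, Matrix.nonsing_inv_apply_not_isUnit _ h]

theorem projRowMat_transpose {T d : ℕ} (X : Matrix (Fin T) (Fin d) ℝ) :
    (projRowMat X)ᵀ = projRowMat X := by
  simp [projRowMat, pinvRow, transpose_mul, Matrix.transpose_nonsing_inv, Matrix.mul_assoc]

theorem trace_projRowMat {T d : ℕ} (X : Matrix (Fin T) (Fin d) ℝ) (h : (X * Xᵀ).det ≠ 0) :
    (projRowMat X).trace = T := by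
  rw [projRowMat, pinvRow, Matrix.trace_mul_comm, ← Matrix.mul_assoc,
    Matrix.mul_nonsing_inv _ h.isUnit, Matrix.trace_one, Fintype.card_fin]

/-- A symmetric idempotent satisfies `P i i = ∑ k, P i k ^ 2`, which bounds all its entries.
This gives integrability of the entries of the random projection. -/
theorem abs_projRowMat_le_one {T d : ℕ} (X : Matrix (Fin T) (Fin d) ℝ) (i j : Fin d) :
    |projRowMat X i j| ≤ 1 := by
  have h : ∑ k, projRowMat X i k ^ 2 = projRowMat X i i := by
    conv_rhs => rw [← projRowMat_mul_self X, Matrix.mul_apply]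
    refine Finset.sum_congr rfl fun k _ => ?_
    have hs : projRowMat X k i = projRowMat X i k := congrFun₂ (projRowMat_transpose X) i k
    rw [hs, sq]
  have hle : ∀ k, projRowMat X i k ^ 2 ≤ projRowMat X i i := fun k =>
    h ▸ Finset.single_le_sum (f := fun k => projRowMat X i k ^ 2)
      (fun _ _ => sq_nonneg _) (Finset.mem_univ k)
  have h1 := hle i
  have h2 := hle j
  rw [← sq_le_one_iff_abs_le_one]
  nlinarith

theorem fakeNoiseless_eq {T d : ℕ} (X : Matrix (Fin T) (Fin d) ℝ) (w : Fin d → ℝ) (m : ℕ) :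
    fakeNoiseless X w (m + 1) = projRowMat X *ᵥ w := by
  induction m with
  | zero => simp [fakeNoiseless, projRowMat]
  | succ m ih =>
    rw [fakeNoiseless, ih, Matrix.mulVec_mulVec, ← projRowMat, Matrix.mulVec_mulVec,
      projRowMat_mul_self]

theorem projRowMat_dot_self {T d : ℕ} (X : Matrix (Fin T) (Fin d) ℝ) (w : Fin d → ℝ) :
    (projRowMat X *ᵥ w) ⬝ᵥ (projRowMat X *ᵥ w) = w ⬝ᵥ (projRowMat X *ᵥ w) := by
  rw [Matrix.dotProduct_mulVec, ← Matrix.mulVec_transpose, projRowMat_transpose,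
    Matrix.mulVec_mulVec, projRowMat_mul_self, dotProduct_comm]

theorem continuous_gram (T d : ℕ) :
    Continuous fun Z : Fin T → Fin d → ℝ => Matrix.of Z * (Matrix.of Z)ᵀ := by
  have h : Continuous fun Z : Fin T → Fin d → ℝ => Matrix.of Z := continuous_id
  exact h.matrix_mul h.matrix_transpose

theorem measurable_projRowMat {T d : ℕ} (i j : Fin d) :
    Measurable fun Z : Fin T → Fin d → ℝ => projRowMat (Matrix.of Z) i j := by
  have hdet := (continuous_gram T d).matrix_det.measurable
  have hadj : ∀ a b, Measurable fun Z : Fin T → Fin d → ℝ =>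
      (Matrix.of Z * (Matrix.of Z)ᵀ).adjugate a b := fun a b =>
    ((continuous_gram T d).matrix_adjugate.matrix_elem a b).measurable
  simp only [projRowMat, pinvRow, Matrix.mul_apply (M := _ * _),
    Matrix.mul_apply (M := (Matrix.of _)ᵀ),
    Matrix.inv_def, Ring.inverse_eq_inv',
    Matrix.smul_apply, smul_eq_mul, Matrix.transpose_apply, Matrix.of_apply]
  fun_prop

instance (T d : ℕ) : IsProbabilityMeasure (stdGaussMat T d) := by
  unfold stdGaussMat; infer_instance


theorem linearIndependent_row_iff_rank {T d : ℕ} (X : Matrix (Fin T) (Fin d) ℝ) :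
    LinearIndependent ℝ X.row ↔ X.rank = T := by
  rw [linearIndependent_iff_card_eq_finrank_span, Matrix.rank_eq_finrank_span_row,
    Fintype.card_fin, eq_comm]
  rfl

theorem det_gram_ne_zero_iff {T d : ℕ} (X : Matrix (Fin T) (Fin d) ℝ) :
    (X * Xᵀ).det ≠ 0 ↔ LinearIndependent ℝ X.row := by
  rw [linearIndependent_row_iff_rank, ← Matrix.rank_self_mul_transpose,
    ← linearIndependent_row_iff_rank, Matrix.linearIndependent_rows_iff_isUnit,
    Matrix.isUnit_iff_isUnit_det, isUnit_iff_ne_zero]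

/-- Conditionally on all coordinates but one with a nonzero coefficient, a linear functional vanishes
for a single value of the remaining coordinate, and the Gaussian has no atoms. -/
theorem ae_functional_ne_zero {d : ℕ} (a : Fin d → ℝ) (ha : a ≠ 0) :
    ∀ᵐ x ∂(Measure.pi fun _ : Fin d => gaussianReal 0 1), ∑ i, a i * x i ≠ 0 := by
  obtain ⟨i, hi⟩ := Function.ne_iff.mp ha
  obtain _ | k := d
  · exact i.elim0
  have hmp := measurePreserving_piFinSuccAbove (fun _ : Fin (k + 1) => gaussianReal 0 1) i
  have key : ∀ᵐ p ∂((gaussianReal 0 1).prod (Measure.pi fun _ : Fin k => gaussianReal 0 1)),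
      a i * p.1 + ∑ j, a (i.succAbove j) * p.2 j ≠ 0 := by
    have hmeas : MeasurableSet {p : ℝ × (Fin k → ℝ) |
        a i * p.1 + ∑ j, a (i.succAbove j) * p.2 j ≠ 0} :=
      (measurableSet_singleton (0 : ℝ)).compl.preimage (by fun_prop)
    rw [Measure.ae_prod_iff_ae_ae hmeas, Measure.ae_ae_comm hmeas]
    refine Filter.Eventually.of_forall fun y => ?_
    have hs := nullSingletonClass_gaussianReal (μ := 0) (v := 1) one_ne_zero
    have : ∀ᵐ x ∂(gaussianReal 0 1), x ≠ -(∑ j, a (i.succAbove j) * y j) / a i := by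
      simp [ae_iff, measure_singleton]
    filter_upwards [this] with x hx h
    apply hx
    rw [eq_div_iff hi]
    linarith
  have := hmp.quasiMeasurePreserving.ae key
  filter_upwards [this] with x hx
  rw [Fin.sum_univ_succAbove _ i]
  exact hx

theorem ae_notMem_submodule {d : ℕ} (S : Submodule ℝ (Fin d → ℝ)) (hS : S ≠ ⊤) :
    ∀ᵐ x ∂(Measure.pi fun _ : Fin d => gaussianReal 0 1), x ∉ S := by
  obtain ⟨f, hf, hle⟩ := S.exists_le_ker_of_lt_top hS.lt_top
  have hfx : ∀ x, f x = ∑ i, f (Pi.single i 1) * x i := fun x => by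
    conv_lhs => rw [LinearMap.pi_apply_eq_sum_univ f x]
    refine Finset.sum_congr rfl fun i _ => ?_
    rw [smul_eq_mul, mul_comm]
    congr 2
    ext j
    simp [Pi.single_apply, eq_comm]
  have ha : (fun i => f (Pi.single i 1)) ≠ 0 := fun h => hf <| LinearMap.ext fun x => by
    rw [hfx]
    simp [fun i => congrFun h i]
  filter_upwards [ae_functional_ne_zero _ ha] with x hx hxS
  exact hx ((hfx x).symm.trans (hle hxS))

/-- A Gaussian design has full row rank almost surely. By induction on the number of rows: the span
of the `T < d` other rows is a proper subspace, which a new independent Gaussian row almost surely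
avoids. -/
theorem ae_det_gram_ne_zero (T d : ℕ) (h : T ≤ d) :
    ∀ᵐ Z ∂(stdGaussMat T d), (Matrix.of Z * (Matrix.of Z)ᵀ).det ≠ 0 := by
  induction T with
  | zero => simp
  | succ T ih =>
    have hmp := measurePreserving_piFinSuccAbove
      (fun _ : Fin (T + 1) => Measure.pi fun _ : Fin d => gaussianReal 0 1) 0
    have key : ∀ᵐ p ∂((Measure.pi fun _ : Fin d => gaussianReal 0 1).prod (stdGaussMat T d)),
        (Matrix.of (Fin.cons p.1 p.2 : Fin (T + 1) → Fin d → ℝ) *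
          (Matrix.of (Fin.cons p.1 p.2 : Fin (T + 1) → Fin d → ℝ))ᵀ).det ≠ 0 := by
      have hc : Continuous fun p : (Fin d → ℝ) × (Fin T → Fin d → ℝ) =>
          (Fin.cons p.1 p.2 : Fin (T + 1) → Fin d → ℝ) := by
        fun_prop
      have hmeas := (measurableSet_singleton (0 : ℝ)).compl.preimage
        (((continuous_gram (T + 1) d).comp hc).matrix_det.measurable)
      have hswap := Measure.ae_ae_comm (μ := Measure.pi fun _ : Fin d => gaussianReal 0 1)
        (ν := stdGaussMat T d) (p := fun x v =>
        (Matrix.of (Fin.cons x v : Fin (T + 1) → Fin d → ℝ) *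
          (Matrix.of (Fin.cons x v : Fin (T + 1) → Fin d → ℝ))ᵀ).det ≠ 0) hmeas
      refine (Measure.ae_prod_iff_ae_ae hmeas).mpr (hswap.mpr ?_)
      filter_upwards [ih (by omega)] with v hv
      rw [det_gram_ne_zero_iff] at hv
      have hS : Submodule.span ℝ (Set.range v) ≠ ⊤ := fun htop => by
        have h1 := finrank_range_le_card (R := ℝ) v
        rw [Set.finrank, htop, finrank_top, Module.finrank_fin_fun, Fintype.card_fin] at h1
        omega
      filter_upwards [ae_notMem_submodule _ hS] with x hx
      rw [det_gram_ne_zero_iff]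
      exact linearIndependent_finCons.mpr ⟨hv, hx⟩
    have := hmp.quasiMeasurePreserving.ae key
    filter_upwards [this] with Z hZ
    have hcons : (Fin.cons ((MeasurableEquiv.piFinSuccAbove (fun _ => Fin d → ℝ) 0) Z).1
      ((MeasurableEquiv.piFinSuccAbove (fun _ => Fin d → ℝ) 0) Z).2 :
        Fin (T + 1) → Fin d → ℝ) = Z :=
      Fin.cons_self_tail Z
    rwa [hcons] at hZ

theorem integrable_projRowMat {T d : ℕ} (i j : Fin d) :
    Integrable (fun Z => projRowMat (Matrix.of Z) i j) (stdGaussMat T d) :=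
  .of_bound (measurable_projRowMat i j).aestronglyMeasurable 1
    (.of_forall fun _ => abs_projRowMat_le_one _ i j)

/-- Any orthogonal `Q` preserving the law of one Gaussian row leaves `E[P]` invariant under
conjugation. It is applied below to diagonal sign matrices and to permutation matrices. -/
theorem integral_projRowMat_conj {T d : ℕ} (Q : Matrix (Fin d) (Fin d) ℝ) (hQ : Q * Qᵀ = 1)
    (hmp : MeasurePreserving (fun x : Fin d → ℝ => x ᵥ* Q)
      (Measure.pi fun _ => gaussianReal 0 1) (Measure.pi fun _ => gaussianReal 0 1))
    (i j : Fin d) :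
    ∫ Z, (Qᵀ * projRowMat (Matrix.of Z) * Q) i j ∂(stdGaussMat T d) =
      ∫ Z, projRowMat (Matrix.of Z) i j ∂(stdGaussMat T d) := by
  have h : MeasurePreserving (fun (Z : Fin T → Fin d → ℝ) t => Z t ᵥ* Q)
      (stdGaussMat T d) (stdGaussMat T d) := measurePreserving_pi _ _ fun _ => hmp
  conv_rhs => rw [← h.map_eq]
  rw [integral_map h.measurable.aemeasurable (measurable_projRowMat i j).aestronglyMeasurable]
  refine integral_congr_ae (.of_forall fun Z => ?_)
  have hZ : Matrix.of (fun t => Z t ᵥ* Q) = Matrix.of Z * Q := rfl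
  dsimp only
  rw [hZ, projRowMat_orth _ _ hQ]

/-- Flipping the sign of the `j`-th column changes the sign of `P i j`. -/
theorem integral_projRowMat_offDiag {T d : ℕ} {i j : Fin d} (hij : i ≠ j) :
    ∫ Z, projRowMat (Matrix.of Z) i j ∂(stdGaussMat T d) = 0 := by
  set s : Fin d → ℝ := fun k => if k = j then -1 else 1 with hs
  have hss : ∀ k, s k * s k = 1 := fun k => by by_cases h : k = j <;> simp [hs, h]
  have hneg : MeasurePreserving (fun x : ℝ => -x) (gaussianReal 0 1) (gaussianReal 0 1) :=
    ⟨by fun_prop, by rw [gaussianReal_map_neg, neg_zero]⟩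
  have hmp : MeasurePreserving (fun x : Fin d → ℝ => x ᵥ* Matrix.diagonal s)
      (Measure.pi fun _ => gaussianReal 0 1) (Measure.pi fun _ => gaussianReal 0 1) := by
    have := measurePreserving_pi (fun _ : Fin d => gaussianReal 0 1) (fun _ => gaussianReal 0 1)
      (f := fun k x => x * s k) fun k => by
        by_cases h : k = j
        · simpa [hs, h] using hneg
        · simp only [hs, h, if_false, mul_one]
          exact MeasurePreserving.id _
    convert this using 3 with x k
    exact Matrix.vecMul_diagonal _ _ _
  have := integral_projRowMat_conj (T := T) (Matrix.diagonal s)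
    (by simp [Matrix.diagonal_mul_diagonal, hss]) hmp i j
  simp [Matrix.diagonal_transpose, Matrix.mul_diagonal, Matrix.diagonal_mul, hs, hij,
    integral_neg] at this
  linarith

/-- Exchanging the columns `i` and `j` exchanges `P i i` and `P j j`. -/
theorem integral_projRowMat_diag_eq {T d : ℕ} (i j : Fin d) :
    ∫ Z, projRowMat (Matrix.of Z) i i ∂(stdGaussMat T d) =
      ∫ Z, projRowMat (Matrix.of Z) j j ∂(stdGaussMat T d) := by
  let σ : Equiv.Perm (Fin d) := Equiv.swap i j
  have hmp : MeasurePreserving (fun x : Fin d → ℝ => x ᵥ* σ.permMatrix ℝ)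
      (Measure.pi fun _ => gaussianReal 0 1) (Measure.pi fun _ => gaussianReal 0 1) := by
    have := measurePreserving_piCongrLeft (fun _ : Fin d => gaussianReal 0 1) σ
    convert this using 3 with x
    ext k
    simp [Matrix.vecMul_permMatrix, MeasurableEquiv.coe_piCongrLeft, Equiv.piCongrLeft_apply]
  have hQ : σ.permMatrix ℝ * (σ.permMatrix ℝ)ᵀ = 1 := by
    rw [Matrix.transpose_permMatrix, ← Matrix.permMatrix_mul]
    simp
  have := integral_projRowMat_conj (T := T) (σ.permMatrix ℝ) hQ hmp j j
  rw [← this]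
  refine integral_congr_ae (.of_forall fun Z => ?_)
  simp [Equiv.Perm.permMatrix, PEquiv.toMatrix_toPEquiv_mul, PEquiv.mul_toMatrix_toPEquiv, σ]

/-- The diagonal expectations are all equal and sum to `E[tr P] = T`. -/
theorem integral_projRowMat_diag {T d : ℕ} (h : T ≤ d) (i : Fin d) :
    ∫ Z, projRowMat (Matrix.of Z) i i ∂(stdGaussMat T d) = (T : ℝ) / d := by
  have htr : ∫ Z, (projRowMat (Matrix.of Z)).trace ∂(stdGaussMat T d) = T := by
    rw [integral_congr_ae (g := fun _ => (T : ℝ))]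
    · simp
    · filter_upwards [ae_det_gram_ne_zero T d h] with Z hZ using trace_projRowMat _ hZ
  simp only [Matrix.trace, Matrix.diag_apply] at htr
  rw [integral_finsetSum _ fun j _ => integrable_projRowMat j j,
    Finset.sum_congr rfl fun j _ => integral_projRowMat_diag_eq j i] at htr
  have hd : (d : ℝ) ≠ 0 := Nat.cast_ne_zero.mpr (Fin.pos i).ne'
  rw [eq_div_iff hd, ← htr]
  simp [mul_comm]

theorem dot_projRowMat_eq_sum {T d : ℕ} (X : Matrix (Fin T) (Fin d) ℝ) (w : Fin d → ℝ) :
    w ⬝ᵥ (projRowMat X *ᵥ w) = ∑ i, ∑ j, w i * w j * projRowMat X i j := by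
  simp only [dotProduct, Matrix.mulVec, Finset.mul_sum]
  exact Finset.sum_congr rfl fun i _ => Finset.sum_congr rfl fun j _ => by ring

theorem integrable_dot_projRowMat {T d : ℕ} (w : Fin d → ℝ) :
    Integrable (fun Z => w ⬝ᵥ (projRowMat (Matrix.of Z) *ᵥ w)) (stdGaussMat T d) := by
  simp only [dot_projRowMat_eq_sum]
  exact integrable_finsetSum _ fun i _ => integrable_finsetSum _ fun j _ =>
    (integrable_projRowMat i j).const_mul _

theorem integral_dot_projRowMat {T d : ℕ} (h : T ≤ d) (w : Fin d → ℝ) :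
    ∫ Z, w ⬝ᵥ (projRowMat (Matrix.of Z) *ᵥ w) ∂(stdGaussMat T d) =
      (T : ℝ) / d * (w ⬝ᵥ w) := by
  simp only [dot_projRowMat_eq_sum]
  rw [integral_finsetSum _ fun i _ => integrable_finsetSum _ fun j _ =>
    (integrable_projRowMat i j).const_mul _, dotProduct, Finset.mul_sum]
  refine Finset.sum_congr rfl fun i _ => ?_
  rw [integral_finsetSum _ fun j _ => (integrable_projRowMat i j).const_mul _,
    Finset.sum_eq_single i]
  · rw [integral_const_mul, integral_projRowMat_diag h, mul_comm]
  · intro j _ hj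
    rw [integral_const_mul, integral_projRowMat_offDiag hj.symm, mul_zero]
  · simp

/-- In the noiseless fake-data generation process with identical
over-parametrized design `X₀` (a `T₀ × d` matrix with i.i.d. standard Gaussian
entries, `T₀ ≤ d`) across generations: `ŵ_n = P₀ w₀` for all `n ≥ 1`, and exactly
`E‖ŵ_n‖² = (T₀/d)‖w₀‖²` and `E‖ŵ_n − w₀‖² = (1 − T₀/d)‖w₀‖²`, independently of `n ≥ 1`. -/
theorem model_collapse_dependent_case (d T0 : ℕ) (hT0 : 1 ≤ T0) (hT0d : T0 ≤ d)
    (w0 : Fin d → ℝ) (n : ℕ) (hn : 1 ≤ n) :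
    (∀ Z : Fin T0 → Fin d → ℝ,
        fakeNoiseless (Matrix.of Z) w0 n = projRowMat (Matrix.of Z) *ᵥ w0) ∧
    (∫ Z, (fakeNoiseless (Matrix.of Z) w0 n) ⬝ᵥ (fakeNoiseless (Matrix.of Z) w0 n)
        ∂(stdGaussMat T0 d) = (T0 : ℝ) / d * (w0 ⬝ᵥ w0)) ∧
    (∫ Z, (fakeNoiseless (Matrix.of Z) w0 n - w0) ⬝ᵥ (fakeNoiseless (Matrix.of Z) w0 n - w0)
        ∂(stdGaussMat T0 d) = (1 - (T0 : ℝ) / d) * (w0 ⬝ᵥ w0)) := by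
  obtain ⟨m, rfl⟩ : ∃ m, n = m + 1 := ⟨n - 1, by omega⟩
  refine ⟨fun Z => fakeNoiseless_eq _ w0 m, ?_, ?_⟩
  · simp only [fakeNoiseless_eq, projRowMat_dot_self]
    exact integral_dot_projRowMat hT0d w0
  · have hsq : ∀ X : Matrix (Fin T0) (Fin d) ℝ,
        (projRowMat X *ᵥ w0 - w0) ⬝ᵥ (projRowMat X *ᵥ w0 - w0) =
          w0 ⬝ᵥ w0 - w0 ⬝ᵥ (projRowMat X *ᵥ w0) := fun X => by
      rw [sub_dotProduct, dotProduct_sub, dotProduct_sub, projRowMat_dot_self,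
        dotProduct_comm (projRowMat X *ᵥ w0) w0]
      ring
    simp only [fakeNoiseless_eq, hsq]
    rw [integral_sub (integrable_const _) (integrable_dot_projRowMat w0),
      integral_dot_projRowMat hT0d w0]
    simp
    ring

end
end

section
/- Let Σ ∈ ℝ^{d×d} be positive semidefinite, T > 0 a real number, and λ > 0. Define df₁(t) := tr(Σ (Σ + t I_d)⁻¹) for t > 0. Then there exists a unique κ > 0 satisfying the self-consistent equation κ − λ = κ · df₁(κ)/T. -/
/-!
By the spectral theorem `tr(Σ (Σ + κ I)⁻¹) = ∑ i, μ i / (μ i + κ)`, where the `μ i ≥ 0` are the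
eigenvalues of `Σ` (`trace_mul_resolvent`), so the claim concerns a scalar equation.

Uniqueness: after division by `κ > 0` the equation reads
`1 = lam / κ + (∑ i, μ i / (μ i + κ)) / T`, whose right-hand side is strictly decreasing in `κ`.

Existence: `κ ↦ κ - lam - κ (∑ i, μ i / (μ i + κ)) / T` is continuous on `(0, ∞)`, nonpositive at
`κ = lam`, and nonnegative at `κ = lam + (∑ i, μ i) / T` because `κ μ i / (μ i + κ) ≤ μ i`; the
intermediate value theorem gives a zero in between.
-/

open Matrix

/-- Trace of a Hermitian matrix times its resolvent, in terms of the eigenvalues. -/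
lemma trace_mul_resolvent {d : ℕ} {A : Matrix (Fin d) (Fin d) ℝ} (hA : A.IsHermitian) (κ : ℝ)
    (hκ : ∀ i, hA.eigenvalues i + κ ≠ 0) :
    (A * (A + κ • (1 : Matrix (Fin d) (Fin d) ℝ))⁻¹).trace =
      ∑ i, hA.eigenvalues i / (hA.eigenvalues i + κ) := by
  obtain ⟨U, V, hUV, hVU, hD⟩ : ∃ U V : Matrix (Fin d) (Fin d) ℝ, U * V = 1 ∧ V * U = 1 ∧
      A = U * diagonal hA.eigenvalues * V :=
    ⟨hA.eigenvectorUnitary, star (hA.eigenvectorUnitary : Matrix (Fin d) (Fin d) ℝ),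
      Unitary.coe_mul_star_self _, Unitary.coe_star_mul_self _, by
        simpa [Unitary.conjStarAlgAut_apply, Function.comp_def] using hA.spectral_theorem⟩
  generalize hA.eigenvalues = μ at *
  have cancel (X Y : Matrix (Fin d) (Fin d) ℝ) : (U * X * V) * (U * Y * V) = U * (X * Y) * V := by
    calc (U * X * V) * (U * Y * V) = U * X * (V * U) * Y * V := by simp only [Matrix.mul_assoc]
      _ = U * (X * Y) * V := by rw [hVU]; simp only [Matrix.mul_assoc, Matrix.mul_one]
  have hshift : A + κ • (1 : Matrix (Fin d) (Fin d) ℝ) = U * diagonal (fun i => μ i + κ) * V := by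
    have h1 : diagonal (fun i => μ i + κ) =
        diagonal μ + κ • (1 : Matrix (Fin d) (Fin d) ℝ) := by
      rw [smul_one_eq_diagonal, diagonal_add]
    rw [h1, Matrix.mul_add, Matrix.add_mul, ← hD, Matrix.mul_smul, Matrix.smul_mul,
      Matrix.mul_one, hUV]
  have hinv : (A + κ • (1 : Matrix (Fin d) (Fin d) ℝ))⁻¹ =
      U * diagonal (fun i => (μ i + κ)⁻¹) * V := by
    apply inv_eq_right_inv
    rw [hshift, cancel, diagonal_mul_diagonal]
    simp [hκ, hUV]
  rw [hinv, hD, cancel, trace_mul_comm, ← Matrix.mul_assoc, hVU, Matrix.one_mul,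
    diagonal_mul_diagonal, trace_diagonal]
  simp only [div_eq_mul_inv]

/-- On `κ > 0` the sum `∑ i, μ i / (μ i + κ)` is antitone in `κ`, so `lam / κ` plus `1 / T` times it
is strictly decreasing; hence two solutions cannot be strictly ordered. -/
lemma not_lt_of_solutions {d : ℕ} {μ : Fin d → ℝ} (hμ : ∀ i, 0 ≤ μ i) {T lam a b : ℝ}
    (hT : 0 < T) (hlam : 0 < lam) (ha : 0 < a)
    (hea : a - lam = a * (∑ i, μ i / (μ i + a)) / T)
    (heb : b - lam = b * (∑ i, μ i / (μ i + b)) / T) : ¬ a < b := by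
  intro hab
  have hb : 0 < b := ha.trans hab
  have hS : ∑ i, μ i / (μ i + b) ≤ ∑ i, μ i / (μ i + a) :=
    Finset.sum_le_sum fun i _ =>
      div_le_div_of_nonneg_left (hμ i) (by linarith [hμ i]) (by linarith)
  have hST := div_le_div_of_nonneg_right hS hT.le
  rw [mul_div_assoc] at hea heb
  -- Cross-multiplying: `b (a - lam) = a b S(a) / T ≥ a b S(b) / T = a (b - lam)`, so `b ≤ a`.
  have h1 := mul_le_mul_of_nonneg_left hST (mul_pos ha hb).le
  have h2 : a * (b - lam) ≤ b * (a - lam) := by rw [hea, heb]; linarith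
  nlinarith

theorem exists_solution {d : ℕ} {μ : Fin d → ℝ} (hμ : ∀ i, 0 ≤ μ i) {T lam : ℝ}
    (hT : 0 < T) (hlam : 0 < lam) :
    ∃ κ : ℝ, 0 < κ ∧ κ - lam = κ * (∑ i, μ i / (μ i + κ)) / T := by
  have hM : 0 ≤ (∑ i, μ i) / T := div_nonneg (Finset.sum_nonneg fun i _ => hμ i) hT.le
  have hle : lam ≤ lam + (∑ i, μ i) / T := by linarith
  have hcont : ContinuousOn (fun κ : ℝ => κ - lam - κ * (∑ i, μ i / (μ i + κ)) / T)
      (Set.Icc lam (lam + (∑ i, μ i) / T)) := by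
    have hsum : ContinuousOn (fun κ : ℝ => ∑ i, μ i / (μ i + κ))
        (Set.Icc lam (lam + (∑ i, μ i) / T)) :=
      continuousOn_finsetSum _ fun i _ => continuousOn_const.div (by fun_prop)
        fun κ hκ => by have := hκ.1; have := hμ i; linarith
    fun_prop
  have hlow : lam - lam - lam * (∑ i, μ i / (μ i + lam)) / T ≤ 0 := by
    have : 0 ≤ lam * (∑ i, μ i / (μ i + lam)) / T :=
      div_nonneg (mul_nonneg hlam.le (Finset.sum_nonneg fun i _ =>
        div_nonneg (hμ i) (by linarith [hμ i]))) hT.le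
    linarith
  have hbound (κ : ℝ) (hκ : 0 < κ) : κ * (∑ i, μ i / (μ i + κ)) / T ≤ (∑ i, μ i) / T := by
    refine div_le_div_of_nonneg_right ?_ hT.le
    rw [Finset.mul_sum]
    refine Finset.sum_le_sum fun i _ => ?_
    have h := hμ i
    rw [← mul_div_assoc, div_le_iff₀ (by linarith)]
    nlinarith
  have hhigh := hbound (lam + (∑ i, μ i) / T) (by linarith)
  obtain ⟨κ, hκ, h0⟩ := intermediate_value_Icc hle hcont ⟨hlow, by linarith⟩
  exact ⟨κ, hlam.trans_le hκ.1, sub_eq_zero.mp h0⟩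

/-- For a positive-semidefinite `Σ`, a real `T > 0` and `λ > 0`,
with `df₁(t) := tr(Σ (Σ + t I)⁻¹)`, there is a unique `κ > 0` satisfying the
self-consistent equation `κ − λ = κ · df₁(κ)/T`. -/
theorem selfConsistent_existsUnique {d : ℕ}
    (Sig : Matrix (Fin d) (Fin d) ℝ) (hSig : Sig.PosSemidef)
    (T : ℝ) (hT : 0 < T) (lam : ℝ) (hlam : 0 < lam) :
    ∃! κ : ℝ, 0 < κ ∧
      κ - lam = κ * (Sig * (Sig + κ • (1 : Matrix (Fin d) (Fin d) ℝ))⁻¹).trace / T := by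
  have hμ := hSig.eigenvalues_nonneg
  have htr (κ : ℝ) (hκ : 0 < κ) := trace_mul_resolvent hSig.isHermitian κ
    fun i => (add_pos_of_nonneg_of_pos (hμ i) hκ).ne'
  obtain ⟨κ, hκ, he⟩ := exists_solution hμ hT hlam
  refine ⟨κ, ⟨hκ, by rw [htr κ hκ]; exact he⟩, ?_⟩
  rintro κ' ⟨hκ', he'⟩
  rw [htr κ' hκ'] at he'
  exact le_antisymm (not_lt.mp (not_lt_of_solutions hμ hT hlam hκ he he'))
    (not_lt.mp (not_lt_of_solutions hμ hT hlam hκ' he' he))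
end

section
/- Let Σ ∈ ℝ^{d×d} be positive semidefinite and T > 0 a real number, and define df_m(t) := tr(Σ^m (Σ + t I_d)^{−m}) for t > 0 and m ∈ {1, 2}. Suppose κ : (0, ∞) → (0, ∞) is differentiable and satisfies κ(λ) − λ = κ(λ) · df₁(κ(λ))/T for all λ > 0, and suppose df₂(κ(λ)) < T. Then κ′(λ) = 1/(1 − df₂(κ(λ))/T), and in particular κ′(λ) ≥ 1. -/
/-!
Diagonalizing `Σ` with eigenvalues `σ i ≥ 0` turns the degrees of freedom into
`df_m(t) = ∑ i, (σ i / (σ i + t)) ^ m` for `t > 0` (`dfm_eq_sum`). The derivative of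
`t * σ / (σ + t)` is `(σ / (σ + t)) ^ 2`, the scalar form of
`Σ(Σ + t)⁻¹ - tΣ(Σ + t)⁻² = Σ²(Σ + t)⁻²`, so `t ↦ t * df₁(t)` has derivative `df₂(t)`
(`hasDerivAt_mul_dfm_one`). Differentiating the self-consistent equation then gives
`κ' - 1 = κ' * df₂(κ) / T`; the lower bound on `κ'` holds because `df₂ ≥ 0`.
-/

open Matrix

noncomputable section

/-- The `m`-th order degrees of freedom of `Σ` at level `t`:
`df_m(t) := tr(Σ^m (Σ + t I)^{−m})`. -/
def dfm {d : ℕ} (Sig : Matrix (Fin d) (Fin d) ℝ) (m : ℕ) (t : ℝ) : ℝ :=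
  (Sig ^ m * ((Sig + t • (1 : Matrix (Fin d) (Fin d) ℝ))⁻¹) ^ m).trace

theorem dfm_eq_sum {d : ℕ} {Sig : Matrix (Fin d) (Fin d) ℝ} (hSig : Sig.PosSemidef)
    (m : ℕ) {t : ℝ} (ht : 0 < t) :
    dfm Sig m t =
      ∑ i, (hSig.isHermitian.eigenvalues i / (hSig.isHermitian.eigenvalues i + t)) ^ m := by
  set σ := hSig.isHermitian.eigenvalues with hσ
  have hne : ∀ i, σ i + t ≠ 0 := fun i => by
    have := hSig.eigenvalues_nonneg i
    positivity
  set φ := Unitary.conjStarAlgAut ℝ (Matrix (Fin d) (Fin d) ℝ)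
    hSig.isHermitian.eigenvectorUnitary with hφ
  have hA : Sig = φ (diagonal σ) := hSig.isHermitian.spectral_theorem
  have htr : ∀ M, (φ M).trace = M.trace := fun M => by
    rw [hφ, Unitary.conjStarAlgAut_apply, trace_mul_cycle, Unitary.coe_star_mul_self, one_mul]
  have hadd : Sig + t • (1 : Matrix (Fin d) (Fin d) ℝ) = φ (diagonal fun i => σ i + t) := by
    rw [hA, ← map_one φ, ← map_smul, ← map_add, smul_one_eq_diagonal, diagonal_add]
  have hinv : (Sig + t • (1 : Matrix (Fin d) (Fin d) ℝ))⁻¹ =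
      φ (diagonal fun i => (σ i + t)⁻¹) := by
    apply Matrix.inv_eq_right_inv
    rw [hadd, ← map_mul, diagonal_mul_diagonal]
    simp [hne]
  rw [dfm, hinv, hA, ← map_pow, ← map_pow, ← map_mul, htr, diagonal_pow, diagonal_pow,
    diagonal_mul_diagonal, trace_diagonal]
  simp [div_eq_mul_inv, mul_pow]

theorem hasDerivAt_mul_dfm_one {d : ℕ} {Sig : Matrix (Fin d) (Fin d) ℝ}
    (hSig : Sig.PosSemidef) {t : ℝ} (ht : 0 < t) :
    HasDerivAt (fun s => s * dfm Sig 1 s) (dfm Sig 2 t) t := by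
  set σ := hSig.isHermitian.eigenvalues with hσ
  have hsum : HasDerivAt (fun s => ∑ i, s * σ i / (σ i + s)) (∑ i, (σ i / (σ i + t)) ^ 2) t := by
    refine HasDerivAt.fun_sum fun i _ => ?_
    have hne : σ i + t ≠ 0 := by
      have := hSig.eigenvalues_nonneg i
      positivity
    refine HasDerivAt.congr_deriv
      (((hasDerivAt_id' t).mul_const (σ i)).fun_div ((hasDerivAt_id' t).const_add (σ i)) hne) ?_
    field_simp
    ring
  rw [dfm_eq_sum hSig 2 ht]
  refine hsum.congr_of_eventuallyEq ?_
  filter_upwards [lt_mem_nhds ht] with s hs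
  rw [dfm_eq_sum hSig 1 hs, Finset.mul_sum]
  simp [hσ, mul_div_assoc]

/-- If `κ : (0,∞) → (0,∞)` is differentiable and satisfies the
self-consistent equation `κ(λ) − λ = κ(λ) df₁(κ(λ))/T` for all `λ > 0`, and if
`df₂(κ(λ)) < T`, then `κ′(λ) = 1/(1 − df₂(κ(λ))/T) ≥ 1`. -/
theorem selfConsistent_deriv {d : ℕ}
    (Sig : Matrix (Fin d) (Fin d) ℝ) (hSig : Sig.PosSemidef)
    (T : ℝ) (hT : 0 < T) (κ : ℝ → ℝ)
    (hpos : ∀ x, 0 < x → 0 < κ x)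
    (hdiff : ∀ x, 0 < x → DifferentiableAt ℝ κ x)
    (heq : ∀ x, 0 < x → κ x - x = κ x * dfm Sig 1 (κ x) / T)
    (lam : ℝ) (hlam : 0 < lam)
    (hdf : dfm Sig 2 (κ lam) < T) :
    deriv κ lam = 1 / (1 - dfm Sig 2 (κ lam) / T) ∧ 1 ≤ deriv κ lam := by
  have hκ := (hdiff lam hlam).hasDerivAt
  have hleft := hκ.sub (hasDerivAt_id lam)
  have hright := ((hasDerivAt_mul_dfm_one hSig (hpos lam hlam)).comp lam hκ).div_const T
  have hkey : deriv κ lam - 1 = dfm Sig 2 (κ lam) * deriv κ lam / T := by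
    refine hleft.unique (hright.congr_of_eventuallyEq ?_)
    filter_upwards [lt_mem_nhds hlam] with x hx
    exact heq x hx
  have hnonneg : 0 ≤ dfm Sig 2 (κ lam) := by
    rw [dfm_eq_sum hSig 2 (hpos lam hlam)]
    positivity
  have hgap : 0 < 1 - dfm Sig 2 (κ lam) / T := by
    rw [sub_pos, div_lt_one hT]
    exact hdf
  have hval : deriv κ lam = 1 / (1 - dfm Sig 2 (κ lam) / T) := by
    rw [eq_div_iff hgap.ne']
    linear_combination hkey
  refine ⟨hval, ?_⟩
  rw [hval, le_div_iff₀ hgap]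
  have : 0 ≤ dfm Sig 2 (κ lam) / T := by positivity
  linarith

end
end

section
/- Let β > 0 and let (λ_k)_{k≥1} be a sequence of positive reals with c₁ k^{−β} ≤ λ_k ≤ c₂ k^{−β} for all k ≥ 1 and some constants 0 < c₁ ≤ c₂. Let m, n ≥ 0 be reals with nβ > 1, and set c := min(m, n − 1/β) and S(D) := Σ_{k=1}^∞ λ_k^n / (1 + D λ_k)^m for D > 0. Then: (i) if m ≠ n − 1/β, there exist constants 0 < A ≤ B and D₀ > 1 such that A D^{−c} ≤ S(D) ≤ B D^{−c} for all D ≥ D₀; (ii) if m = n − 1/β, there exist constants 0 < A ≤ B and D₀ > 1 such that A D^{−c} log D ≤ S(D) ≤ B D^{−c} log D for all D ≥ D₀. -/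
/-!
Write `x = k + 1`, `u = x ^ (-β)` and `T = D ^ (1 / β)`. The summand is always at most a constant
times `u ^ n`, and at most a constant times `D ^ (-m) * u ^ (n - m)`
(`summand_le_tail`, `summand_le_head`); conversely it is at least a constant times
`D ^ (-m) * u ^ (n - m)` when `x ≤ T`, and at least a constant times `u ^ n` when `x ≥ T`
(`head_le_summand`, `tail_le_summand`). So the sum behaves like
`D ^ (-m) * ∑_{x ≤ T} x ^ (-s) + ∑_{x > T} x ^ (-n β)` with `s = (n - m) β`, where the second sum
has order `T ^ (1 - n β) = D ^ (-(n - 1 / β))`.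

* If `s > 1`, the head bound is summable over all `x`, and the term `x = 1` alone has order
  `D ^ (-m)`.
* If `s < 1`, the head has order `D ^ (-m) * T ^ (1 - s) = T ^ (1 - n β)`, the same as the tail,
  and the roughly `T` terms with `T ≤ x ≤ 4 T` already give the lower bound.
* If `s = 1`, the head is `D ^ (-m)` times a harmonic sum, of order `log T`, and dominates the tail.

The power sums are estimated by telescoping, through Bernoulli-type inequalities, instead of by
integrals.
-/

noncomputable section

/-! ### Two-sided bounds on a single summand -/

section Summand

variable {l u c₁ c₂ D m n : ℝ}

lemma summand_le_tail (hu : 0 < u) (hc₁ : 0 < c₁) (h1 : c₁ * u ≤ l) (h2 : l ≤ c₂ * u)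
    (hc : c₁ ≤ c₂) (hD : 0 < D) (hm : 0 ≤ m) (hn : 0 ≤ n) :
    l ^ n / (1 + D * l) ^ m ≤ c₂ ^ n * u ^ n := by
  have hl : 0 < l := lt_of_lt_of_le (by positivity) h1
  have hc2 : 0 < c₂ := by linarith
  have h3 : 1 ≤ (1 + D * l) ^ m := Real.one_le_rpow (by nlinarith [mul_pos hD hl]) hm
  rw [← Real.mul_rpow hc2.le hu.le]
  calc l ^ n / (1 + D * l) ^ m ≤ l ^ n := div_le_self (by positivity) h3
    _ ≤ _ := Real.rpow_le_rpow hl.le h2 hn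

lemma summand_le_head (hu : 0 < u) (hc₁ : 0 < c₁) (h1 : c₁ * u ≤ l) (h2 : l ≤ c₂ * u)
    (hc : c₁ ≤ c₂) (hD : 0 < D) (hm : 0 ≤ m) (hn : 0 ≤ n) :
    l ^ n / (1 + D * l) ^ m ≤ c₂ ^ n / c₁ ^ m * (D ^ (-m) * u ^ (n - m)) := by
  have hl : 0 < l := lt_of_lt_of_le (by positivity) h1
  have hc2 : 0 < c₂ := by linarith
  have h3 : (D * (c₁ * u)) ^ m ≤ (1 + D * l) ^ m := by
    apply Real.rpow_le_rpow (by positivity) _ hm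
    have := mul_le_mul_of_nonneg_left h1 hD.le
    linarith
  calc l ^ n / (1 + D * l) ^ m ≤ (c₂ * u) ^ n / (D * (c₁ * u)) ^ m :=
        div_le_div₀ (by positivity) (Real.rpow_le_rpow hl.le h2 hn) (by positivity) h3
    _ = _ := by
      rw [Real.mul_rpow hc2.le hu.le, Real.mul_rpow hD.le (by positivity),
        Real.mul_rpow hc₁.le hu.le, Real.rpow_neg hD.le, Real.rpow_sub hu]
      field_simp

lemma head_le_summand (hu : 0 < u) (hc₁ : 0 < c₁) (h1 : c₁ * u ≤ l) (h2 : l ≤ c₂ * u)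
    (hc : c₁ ≤ c₂) (hD : 0 < D) (hm : 0 ≤ m) (hn : 0 ≤ n) (hDu : 1 ≤ D * u) :
    c₁ ^ n / (1 + c₂) ^ m * (D ^ (-m) * u ^ (n - m)) ≤ l ^ n / (1 + D * l) ^ m := by
  have hl : 0 < l := lt_of_lt_of_le (by positivity) h1
  have hc2 : 0 < c₂ := by linarith
  have h3 : (1 + D * l) ^ m ≤ ((1 + c₂) * (D * u)) ^ m := by
    apply Real.rpow_le_rpow (by positivity) _ hm
    have := mul_le_mul_of_nonneg_left h2 hD.le
    nlinarith
  calc _ = (c₁ * u) ^ n / ((1 + c₂) * (D * u)) ^ m := by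
        rw [Real.mul_rpow hc₁.le hu.le, Real.mul_rpow (by positivity) (by positivity),
          Real.mul_rpow hD.le hu.le, Real.rpow_neg hD.le, Real.rpow_sub hu]
        field_simp
    _ ≤ _ := div_le_div₀ (by positivity) (Real.rpow_le_rpow (by positivity) h1 hn)
        (by positivity) h3

lemma tail_le_summand (hu : 0 < u) (hc₁ : 0 < c₁) (h1 : c₁ * u ≤ l) (h2 : l ≤ c₂ * u)
    (hc : c₁ ≤ c₂) (hD : 0 < D) (hm : 0 ≤ m) (hn : 0 ≤ n) (hDu : D * u ≤ 1) :
    c₁ ^ n / (1 + c₂) ^ m * u ^ n ≤ l ^ n / (1 + D * l) ^ m := by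
  have hl : 0 < l := lt_of_lt_of_le (by positivity) h1
  have hc2 : 0 < c₂ := by linarith
  have h3 : (1 + D * l) ^ m ≤ (1 + c₂) ^ m := by
    apply Real.rpow_le_rpow (by positivity) _ hm
    have := mul_le_mul_of_nonneg_left h2 hD.le
    nlinarith
  calc _ = (c₁ * u) ^ n / (1 + c₂) ^ m := by
        rw [Real.mul_rpow hc₁.le hu.le]
        field_simp
    _ ≤ _ := div_le_div₀ (by positivity) (Real.rpow_le_rpow (by positivity) h1 hn)
        (by positivity) h3

end Summand

/-! ### Power sums -/

lemma rpow_neg_ge_tangent {y q : ℝ} (hy : 0 < y) (hq : 0 ≤ q) : 1 + q * (1 - y) ≤ y ^ (-q) := by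
  rw [Real.rpow_def_of_pos hy]
  have h1 := Real.log_le_sub_one_of_pos hy
  have h2 := Real.add_one_le_exp (Real.log y * -q)
  nlinarith

/-- Telescoping bound for the tail; the right-hand side is the integral of `q x ^ (-(q + 1))` over
`[t, t + 1]`, where the integrand is nonincreasing. -/
lemma rpow_tail_step {t q : ℝ} (ht : 0 < t) (hq : 0 ≤ q) :
    q * (t + 1) ^ (-(q + 1)) ≤ t ^ (-q) - (t + 1) ^ (-q) := by
  have h := rpow_neg_ge_tangent (y := t / (t + 1)) (by positivity) hq
  rw [Real.div_rpow ht.le (by positivity), le_div_iff₀ (by positivity)] at h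
  have e : (t + 1) ^ (-(q + 1)) = (t + 1) ^ (-q) / (t + 1) := by
    rw [neg_add', Real.rpow_sub_one (by positivity)]
  rw [e]
  have e2 : 1 - t / (t + 1) = 1 / (t + 1) := by field_simp; ring
  rw [e2] at h
  calc q * ((t + 1) ^ (-q) / (t + 1))
      = (1 + q * (1 / (t + 1))) * (t + 1) ^ (-q) - (t + 1) ^ (-q) := by ring
    _ ≤ _ := by linarith

/-- Telescoping bound for the head; the right-hand side is the integral of `σ x ^ (σ - 1)` over
`[t, t + 1]`, where the integrand is nonincreasing. -/
lemma rpow_head_step {t σ : ℝ} (ht : 0 ≤ t) (h0 : 0 ≤ σ) (h1 : σ ≤ 1) :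
    σ * (t + 1) ^ (σ - 1) ≤ (t + 1) ^ σ - t ^ σ := by
  have hp : 0 < t + 1 := by linarith
  have h := rpow_one_add_le_one_add_mul_self (s := -(1 / (t + 1)))
    (by rw [neg_le_neg_iff, div_le_one hp]; linarith) h0 h1
  have e2 : 1 + -(1 / (t + 1)) = t / (t + 1) := by field_simp; ring
  rw [e2, Real.div_rpow ht hp.le, div_le_iff₀ (by positivity)] at h
  rw [Real.rpow_sub_one hp.ne']
  calc σ * ((t + 1) ^ σ / (t + 1))
      = (t + 1) ^ σ - (1 + σ * -(1 / (t + 1))) * (t + 1) ^ σ := by ring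
    _ ≤ _ := by linarith

lemma summable_add_one_rpow {p : ℝ} (hp : 1 < p) :
    Summable fun k : ℕ => ((k : ℝ) + 1) ^ (-p) := by
  have := (summable_nat_add_iff 1).2 (Real.summable_nat_rpow.2 (show -p < -1 by linarith))
  simpa using this

lemma tsum_rpow_tail_le {p : ℝ} (hp : 1 < p) {N : ℕ} (hN : 0 < N) :
    ∑' k : ℕ, (((k + N : ℕ) : ℝ) + 1) ^ (-p) ≤ (N : ℝ) ^ (1 - p) / (p - 1) := by
  apply Real.tsum_le_of_sum_range_le (fun k => by positivity)
  intro M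
  have hp' : 0 < p - 1 := by linarith
  rw [le_div_iff₀' hp', Finset.mul_sum]
  calc ∑ k ∈ Finset.range M, (p - 1) * (((k + N : ℕ) : ℝ) + 1) ^ (-p)
      ≤ ∑ k ∈ Finset.range M,
          (((k + N : ℕ) : ℝ) ^ (1 - p) - (((k + 1 : ℕ) + N : ℕ) : ℝ) ^ (1 - p)) := by
        apply Finset.sum_le_sum
        intro k _
        have h := rpow_tail_step (t := ((k + N : ℕ) : ℝ)) (q := p - 1)
          (by exact_mod_cast (by omega : 0 < k + N)) hp'.le
        have e1 : -(p - 1 + 1) = -p := by ring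
        have e2 : -(p - 1) = 1 - p := by ring
        rw [e1, e2] at h
        have e3 : (((k + 1 : ℕ) + N : ℕ) : ℝ) = ((k + N : ℕ) : ℝ) + 1 := by push_cast; ring
        rw [e3]
        exact h
    _ = (N : ℝ) ^ (1 - p) - ((M + N : ℕ) : ℝ) ^ (1 - p) := by
        rw [Finset.sum_range_sub' (fun k => ((k + N : ℕ) : ℝ) ^ (1 - p))]
        simp
    _ ≤ _ := by
        have : 0 ≤ ((M + N : ℕ) : ℝ) ^ (1 - p) := by positivity
        linarith

lemma sum_rpow_head_le_of_nonneg {s : ℝ} (h0 : 0 ≤ s) (h1 : s < 1) (N : ℕ) :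
    ∑ k ∈ Finset.range N, ((k : ℝ) + 1) ^ (-s) ≤ (N : ℝ) ^ (1 - s) / (1 - s) := by
  have hs : 0 < 1 - s := by linarith
  rw [le_div_iff₀' hs, Finset.mul_sum]
  calc ∑ k ∈ Finset.range N, (1 - s) * ((k : ℝ) + 1) ^ (-s)
      ≤ ∑ k ∈ Finset.range N, (((k + 1 : ℕ) : ℝ) ^ (1 - s) - (k : ℝ) ^ (1 - s)) := by
        apply Finset.sum_le_sum
        intro k _
        have h := rpow_head_step (t := (k : ℝ)) (σ := 1 - s) (by positivity) hs.le (by linarith)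
        have e : 1 - s - 1 = -s := by ring
        rw [e] at h
        push_cast
        exact h
    _ = (N : ℝ) ^ (1 - s) := by
        rw [Finset.sum_range_sub (fun k : ℕ => (k : ℝ) ^ (1 - s))]
        simp [Real.zero_rpow hs.ne']

lemma sum_rpow_head_le {s : ℝ} (h1 : s < 1) :
    ∃ C, 0 < C ∧ ∀ (N : ℕ) (T : ℝ), (N : ℝ) ≤ T → 0 < T →
      ∑ k ∈ Finset.range N, ((k : ℝ) + 1) ^ (-s) ≤ C * T ^ (1 - s) := by
  rcases le_or_gt 0 s with h0 | h0
  · refine ⟨1 / (1 - s), one_div_pos.2 (by linarith), fun N T hNT hT => ?_⟩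
    have hs : 0 < 1 - s := by linarith
    calc _ ≤ (N : ℝ) ^ (1 - s) / (1 - s) := sum_rpow_head_le_of_nonneg h0 h1 N
      _ ≤ T ^ (1 - s) / (1 - s) := by gcongr
      _ = _ := by ring
  · refine ⟨1, one_pos, fun N T hNT hT => ?_⟩
    calc ∑ k ∈ Finset.range N, ((k : ℝ) + 1) ^ (-s)
        ≤ ∑ k ∈ Finset.range N, T ^ (-s) := by
          apply Finset.sum_le_sum
          intro k hk
          apply Real.rpow_le_rpow (by positivity) _ (by linarith)
          have : ((k + 1 : ℕ) : ℝ) ≤ N := by exact_mod_cast Finset.mem_range.1 hk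
          push_cast at this
          linarith
      _ = N * T ^ (-s) := by simp
      _ ≤ T * T ^ (-s) := by gcongr
      _ = _ := by rw [sub_eq_add_neg, Real.rpow_add hT, Real.rpow_one, one_mul]

lemma sum_inv_eq_harmonic (N : ℕ) :
    ∑ k ∈ Finset.range N, ((k : ℝ) + 1) ^ (-1 : ℝ) = harmonic N := by
  simp [harmonic, Real.rpow_neg_one]

/-- Splitting a series at `N = ⌊T⌋`: the terms beyond `T` contribute at most `O(T ^ (1 - p))`. -/
lemma tsum_le_head_add_tail {a : ℕ → ℝ} {p K T : ℝ} (hp : 1 < p) (hK : 0 ≤ K) (hT : 1 ≤ T)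
    (ha0 : ∀ k, 0 ≤ a k) (ha : ∀ k : ℕ, a k ≤ K * ((k : ℝ) + 1) ^ (-p)) :
    ∑' k, a k ≤ ∑ k ∈ Finset.range ⌊T⌋₊, a k + K * (2 ^ (p - 1) / (p - 1)) * T ^ (1 - p) := by
  have hsum : Summable a :=
    Summable.of_nonneg_of_le ha0 ha ((summable_add_one_rpow hp).mul_left K)
  have hp' : 0 < p - 1 := by linarith
  have hN : 0 < ⌊T⌋₊ := Nat.floor_pos.2 hT
  set N := ⌊T⌋₊ with hNdef
  -- For `T ≥ 1` the floor loses at most a factor of two.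
  have hN2 : T / 2 ≤ N := by
    have h1 : T < N + 1 := Nat.lt_floor_add_one T
    have h2 : (1 : ℝ) ≤ N := by exact_mod_cast hN
    linarith
  rw [← hsum.sum_add_tsum_nat_add N]
  gcongr
  have hs2 : Summable fun k : ℕ => K * (((k + N : ℕ) : ℝ) + 1) ^ (-p) :=
    ((summable_nat_add_iff N).2 (summable_add_one_rpow hp)).mul_left K
  calc ∑' k, a (k + N) ≤ ∑' k : ℕ, K * (((k + N : ℕ) : ℝ) + 1) ^ (-p) :=
        ((summable_nat_add_iff N).2 hsum).tsum_le_tsum (fun k => ha (k + N)) hs2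
    _ = K * ∑' k : ℕ, (((k + N : ℕ) : ℝ) + 1) ^ (-p) := tsum_mul_left
    _ ≤ K * ((N : ℝ) ^ (1 - p) / (p - 1)) := by gcongr; exact tsum_rpow_tail_le hp hN
    _ ≤ K * ((T / 2) ^ (1 - p) / (p - 1)) := by
        have := Real.rpow_le_rpow_of_nonpos (by positivity) hN2 (by linarith : 1 - p ≤ 0)
        gcongr
    _ = _ := by
        have e : (2 : ℝ) ^ (p - 1) = ((2 : ℝ) ^ (1 - p))⁻¹ := by
          rw [← Real.rpow_neg (by norm_num)]; congr 1; ring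
        rw [Real.div_rpow (by positivity) (by norm_num), e]
        field_simp

/-! ### The three regimes -/

/-- The condition `A ≤ B` costs nothing: `B` may be replaced by `max A B`. -/
lemma exists_ordered_consts {S g : ℝ → ℝ} {A B D₀ : ℝ} (hA : 0 < A) (hD₀ : 1 < D₀)
    (hg : ∀ D, D₀ ≤ D → 0 ≤ g D) (h : ∀ D, D₀ ≤ D → A * g D ≤ S D ∧ S D ≤ B * g D) :
    ∃ A B D₀ : ℝ, 0 < A ∧ A ≤ B ∧ 1 < D₀ ∧
      ∀ D : ℝ, D₀ ≤ D → A * g D ≤ S D ∧ S D ≤ B * g D :=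
  ⟨A, max A B, D₀, hA, le_max_left _ _, hD₀, fun D hD => ⟨(h D hD).1, (h D hD).2.trans
    (mul_le_mul_of_nonneg_right (le_max_right _ _) (hg D hD))⟩⟩

/-- **key asymptotic summation lemma.** For a power-law sequence
`λ_k ≍ k^{−β}` (here indexed so that `lam k = λ_{k+1}`), reals `m, n ≥ 0` with
`nβ > 1`, `c := min(m, n − 1/β)` and `S(D) := ∑_{k≥1} λ_k^n / (1 + D λ_k)^m`:
(i) if `m ≠ n − 1/β` then `S(D) ≍ D^{−c}` for `D` large, and
(ii) if `m = n − 1/β` then `S(D) ≍ D^{−c} log D` for `D` large. -/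
theorem powerLaw_sum_asymptotics (β : ℝ) (hβ : 0 < β)
    (lam : ℕ → ℝ) (hpos : ∀ k, 0 < lam k)
    (c₁ c₂ : ℝ) (hc₁ : 0 < c₁) (hc₁₂ : c₁ ≤ c₂)
    (hlow : ∀ k : ℕ, c₁ * ((k : ℝ) + 1) ^ (-β) ≤ lam k)
    (hhigh : ∀ k : ℕ, lam k ≤ c₂ * ((k : ℝ) + 1) ^ (-β))
    (m n : ℝ) (hm : 0 ≤ m) (hn : 0 ≤ n) (hnβ : 1 < n * β) :
    let c : ℝ := min m (n - 1 / β)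
    let S : ℝ → ℝ := fun D => ∑' k : ℕ, lam k ^ n / (1 + D * lam k) ^ m
    (m ≠ n - 1 / β →
      ∃ A B D₀ : ℝ, 0 < A ∧ A ≤ B ∧ 1 < D₀ ∧
        ∀ D : ℝ, D₀ ≤ D → A * D ^ (-c) ≤ S D ∧ S D ≤ B * D ^ (-c)) ∧
    (m = n - 1 / β →
      ∃ A B D₀ : ℝ, 0 < A ∧ A ≤ B ∧ 1 < D₀ ∧
        ∀ D : ℝ, D₀ ≤ D →
          A * (D ^ (-c) * Real.log D) ≤ S D ∧ S D ≤ B * (D ^ (-c) * Real.log D)) := by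
  intro c S
  have hc₂ : 0 < c₂ := lt_of_lt_of_le hc₁ hc₁₂
  -- The four bounds on a summand, in terms of `x = k + 1` and the threshold `T = D ^ (1 / β)`.
  have hx : ∀ k : ℕ, (0 : ℝ) < (k : ℝ) + 1 := fun k => by positivity
  have hu : ∀ k : ℕ, 0 < ((k : ℝ) + 1) ^ (-β) := fun k => by positivity
  have hun : ∀ (k : ℕ) (r : ℝ), (((k : ℝ) + 1) ^ (-β)) ^ r = ((k : ℝ) + 1) ^ (-(r * β)) :=
    fun k r => by rw [← Real.rpow_mul (hx k).le]; congr 1; ring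
  have hTβ : ∀ D : ℝ, 0 < D → (D ^ (1 / β)) ^ β = D := fun D hD => by
    rw [← Real.rpow_mul hD.le, one_div_mul_cancel hβ.ne', Real.rpow_one]
  have hU1 : ∀ D : ℝ, 0 < D → ∀ k : ℕ, lam k ^ n / (1 + D * lam k) ^ m
      ≤ c₂ ^ n * ((k : ℝ) + 1) ^ (-(n * β)) := fun D hD k => by
    rw [← hun]
    exact summand_le_tail (hu k) hc₁ (hlow k) (hhigh k) hc₁₂ hD hm hn
  have hU2 : ∀ D : ℝ, 0 < D → ∀ k : ℕ, lam k ^ n / (1 + D * lam k) ^ m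
      ≤ c₂ ^ n / c₁ ^ m * (D ^ (-m) * ((k : ℝ) + 1) ^ (-((n - m) * β))) := fun D hD k => by
    rw [← hun]
    exact summand_le_head (hu k) hc₁ (hlow k) (hhigh k) hc₁₂ hD hm hn
  have hL1 : ∀ D : ℝ, 0 < D → ∀ k : ℕ, (k : ℝ) + 1 ≤ D ^ (1 / β) →
      c₁ ^ n / (1 + c₂) ^ m * (D ^ (-m) * ((k : ℝ) + 1) ^ (-((n - m) * β)))
        ≤ lam k ^ n / (1 + D * lam k) ^ m := fun D hD k hk => by
    rw [← hun]
    refine head_le_summand (hu k) hc₁ (hlow k) (hhigh k) hc₁₂ hD hm hn ?_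
    have h := Real.rpow_le_rpow (hx k).le hk hβ.le
    rw [hTβ D hD] at h
    rw [Real.rpow_neg (hx k).le, ← div_eq_mul_inv]
    exact (one_le_div (Real.rpow_pos_of_pos (hx k) _)).2 h
  have hL2 : ∀ D : ℝ, 0 < D → ∀ k : ℕ, D ^ (1 / β) ≤ (k : ℝ) + 1 →
      c₁ ^ n / (1 + c₂) ^ m * ((k : ℝ) + 1) ^ (-(n * β))
        ≤ lam k ^ n / (1 + D * lam k) ^ m := fun D hD k hk => by
    rw [← hun]
    refine tail_le_summand (hu k) hc₁ (hlow k) (hhigh k) hc₁₂ hD hm hn ?_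
    have h := Real.rpow_le_rpow (by positivity) hk hβ.le
    rw [hTβ D hD] at h
    rw [Real.rpow_neg (hx k).le, ← div_eq_mul_inv]
    exact (div_le_one (Real.rpow_pos_of_pos (hx k) _)).2 h
  have ha0 : ∀ D : ℝ, 0 < D → ∀ k : ℕ, 0 ≤ lam k ^ n / (1 + D * lam k) ^ m := fun D hD k => by
    have := hpos k
    positivity
  have hsum : ∀ D : ℝ, 0 < D → Summable fun k : ℕ => lam k ^ n / (1 + D * lam k) ^ m :=
    fun D hD => Summable.of_nonneg_of_le (ha0 D hD) (hU1 D hD)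
      ((summable_add_one_rpow hnβ).mul_left _)
  have hT1 : ∀ D : ℝ, 1 ≤ D → 1 ≤ D ^ (1 / β) := fun D hD =>
    Real.one_le_rpow hD (by positivity)
  have hTpow : ∀ D : ℝ, 0 < D → (D ^ (1 / β)) ^ (1 - n * β) = D ^ (-(n - 1 / β)) :=
    fun D hD => by
      rw [← Real.rpow_mul hD.le]; congr 1; field_simp; ring
  set K := c₁ ^ n / (1 + c₂) ^ m with hKdef
  set L := c₂ ^ n / c₁ ^ m with hLdef
  have hK : 0 < K := by positivity
  have hL : 0 < L := by positivity
  have hc₂n : 0 < c₂ ^ n := by positivity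
  set E := c₂ ^ n * (2 ^ (n * β - 1) / (n * β - 1)) with hEdef
  -- Splitting at `T`, with the head bound inserted below `T`.
  have hsplit : ∀ D : ℝ, 1 ≤ D → S D ≤
      L * (D ^ (-m) * ∑ k ∈ Finset.range ⌊D ^ (1 / β)⌋₊, ((k : ℝ) + 1) ^ (-((n - m) * β)))
        + E * D ^ (-(n - 1 / β)) := fun D hD => by
    have hD0 : 0 < D := by linarith
    have h := tsum_le_head_add_tail hnβ hc₂n.le (hT1 D hD) (ha0 D hD0) (hU1 D hD0)
    rw [hTpow D hD0] at h
    refine h.trans ?_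
    gcongr
    rw [Finset.mul_sum, Finset.mul_sum]
    exact Finset.sum_le_sum fun k _ => hU2 D hD0 k
  constructor
  · intro hne
    rcases lt_or_gt_of_ne hne with hlt | hgt
    · have hcm : c = m := min_eq_left hlt.le
      have hs : 1 < (n - m) * β := by
        have h := mul_lt_mul_of_pos_right hlt hβ
        rw [sub_mul, one_div_mul_cancel hβ.ne'] at h
        rw [sub_mul]; linarith
      refine exists_ordered_consts (A := K)
        (B := L * ∑' k : ℕ, ((k : ℝ) + 1) ^ (-((n - m) * β))) (D₀ := 2)
        hK (by norm_num) (fun D hD => by positivity) fun D hD => ?_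
      have hD0 : 0 < D := by linarith
      rw [hcm]
      constructor
      · have h0 := hL1 D hD0 0 (by simpa using hT1 D (by linarith))
        simp only [Nat.cast_zero, zero_add, Real.one_rpow, mul_one] at h0
        exact h0.trans ((hsum D hD0).le_tsum 0 fun k _ => ha0 D hD0 k)
      · calc S D ≤ ∑' k : ℕ, L * D ^ (-m) * ((k : ℝ) + 1) ^ (-((n - m) * β)) := by
              refine (hsum D hD0).tsum_le_tsum (fun k => ?_)
                ((summable_add_one_rpow hs).mul_left _)
              rw [mul_assoc]
              exact hU2 D hD0 k
          _ = _ := by rw [tsum_mul_left]; ring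
    · have hcm : c = n - 1 / β := min_eq_right hgt.le
      have hs : (n - m) * β < 1 := by
        have h := mul_lt_mul_of_pos_right hgt hβ
        rw [sub_mul, one_div_mul_cancel hβ.ne'] at h
        rw [sub_mul]; linarith
      obtain ⟨C, hC, hhead⟩ := sum_rpow_head_le hs
      refine exists_ordered_consts (A := K * 4 ^ (-(n * β))) (B := L * C + E) (D₀ := 2)
        (by positivity) (by norm_num) (fun D hD => by positivity) fun D hD => ?_
      have hD0 : 0 < D := by linarith
      have hT := hT1 D (by linarith)
      rw [hcm]
      constructor
      · rw [← hTpow D hD0]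
        have hL2' := hL2 D hD0
        set T := D ^ (1 / β) with hTdef
        have hT0 : 0 < T := by linarith
        have hN1 : T ≤ ⌈T⌉₊ := Nat.le_ceil T
        have hN2 : (⌈T⌉₊ : ℝ) < T + 1 := Nat.ceil_lt_add_one hT0.le
        set N := ⌈T⌉₊
        -- Each of the `N ≥ T` indices in `[N, 2 N)` has `T ≤ k + 1 ≤ 2 N ≤ 4 T`.
        calc K * 4 ^ (-(n * β)) * T ^ (1 - n * β)
            = T * (K * (4 * T) ^ (-(n * β))) := by
              rw [Real.mul_rpow (by norm_num) hT0.le, sub_eq_add_neg, Real.rpow_add hT0,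
                Real.rpow_one]
              ring
          _ ≤ N * (K * (4 * T) ^ (-(n * β))) := by gcongr
          _ = ∑ k ∈ Finset.Ico N (2 * N), K * (4 * T) ^ (-(n * β)) := by
              rw [Finset.sum_const, Nat.card_Ico, nsmul_eq_mul]
              congr 2
              omega
          _ ≤ ∑ k ∈ Finset.Ico N (2 * N), lam k ^ n / (1 + D * lam k) ^ m := by
              apply Finset.sum_le_sum
              intro k hk
              rw [Finset.mem_Ico] at hk
              have hk1 : (N : ℝ) ≤ k := by exact_mod_cast hk.1
              have hk2 : (k : ℝ) + 1 ≤ 2 * N := by exact_mod_cast hk.2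
              refine le_trans ?_ (hL2' k (by linarith))
              gcongr K * ?_
              exact Real.rpow_le_rpow_of_nonpos (hx k) (by linarith) (by linarith)
          _ ≤ S D := (hsum D hD0).sum_le_tsum _ fun k _ => ha0 D hD0 k
      · have h := hsplit D (by linarith)
        have h2 := hhead ⌊D ^ (1 / β)⌋₊ (D ^ (1 / β)) (Nat.floor_le (by positivity))
          (by positivity)
        have e : D ^ (-m) * (D ^ (1 / β)) ^ (1 - (n - m) * β) = D ^ (-(n - 1 / β)) := by
          rw [← Real.rpow_mul hD0.le, ← Real.rpow_add hD0]; congr 1; field_simp; ring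
        calc S D ≤ _ := h
          _ ≤ L * (D ^ (-m) * (C * (D ^ (1 / β)) ^ (1 - (n - m) * β)))
              + E * D ^ (-(n - 1 / β)) := by gcongr
          _ = _ := by rw [← e]; ring
  · intro heq
    have hcm : c = m := min_eq_left heq.le
    have hs : (n - m) * β = 1 := by
      rw [heq]; field_simp; ring
    have hE : 0 ≤ E := by
      have : 0 < n * β - 1 := by linarith
      positivity
    have he1 : (1 : ℝ) < Real.exp 1 := by simp
    -- For `D ≥ e` the additive constants are absorbed by `log D ≥ 1`.
    refine exists_ordered_consts (g := fun D => D ^ (-c) * Real.log D) (A := K / β)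
      (B := L * (1 + 1 / β) + E) (D₀ := Real.exp 1) (by positivity) he1
      (fun D hD => ?_) fun D hD => ?_
    · have := Real.log_nonneg (by linarith : 1 ≤ D)
      have : 0 < D := by linarith
      positivity
    have hD1 : 1 ≤ D := by linarith
    have hD0 : 0 < D := by linarith
    have hlog : 1 ≤ Real.log D := (Real.le_log_iff_exp_le hD0).2 hD
    have hT := hT1 D hD1
    have hlogT : Real.log (D ^ (1 / β)) = 1 / β * Real.log D := Real.log_rpow hD0 _
    have hharm := sum_inv_eq_harmonic ⌊D ^ (1 / β)⌋₊
    have hfl := Nat.floor_pos.2 hT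
    simp only [hcm]
    constructor
    · have h1 : 1 / β * Real.log D ≤ harmonic ⌊D ^ (1 / β)⌋₊ := by
        rw [← hlogT]
        refine le_trans (Real.log_le_log (by positivity) ?_) (log_add_one_le_harmonic _)
        push_cast
        exact (Nat.lt_floor_add_one _).le
      calc K / β * (D ^ (-m) * Real.log D) = K * D ^ (-m) * (1 / β * Real.log D) := by ring
        _ ≤ K * D ^ (-m) * harmonic ⌊D ^ (1 / β)⌋₊ := by gcongr
        _ ≤ ∑ k ∈ Finset.range ⌊D ^ (1 / β)⌋₊, lam k ^ n / (1 + D * lam k) ^ m := by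
            rw [← hharm, Finset.mul_sum]
            apply Finset.sum_le_sum
            intro k hk
            have hk1 : (k : ℝ) + 1 ≤ ⌊D ^ (1 / β)⌋₊ := by
              exact_mod_cast Finset.mem_range.1 hk
            have h := hL1 D hD0 k (hk1.trans (Nat.floor_le (by positivity)))
            rw [hs] at h
            rw [mul_assoc]
            exact h
        _ ≤ S D := (hsum D hD0).sum_le_tsum _ fun k _ => ha0 D hD0 k
    · have h1 : (harmonic ⌊D ^ (1 / β)⌋₊ : ℝ) ≤ 1 + 1 / β * Real.log D := by
        rw [← hlogT]
        refine (harmonic_le_one_add_log _).trans ?_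
        gcongr
        exact Nat.floor_le (by positivity)
      have h := hsplit D hD1
      rw [hs, hharm, ← heq] at h
      calc S D ≤ _ := h
        _ ≤ L * (D ^ (-m) * (1 + 1 / β * Real.log D)) + E * D ^ (-m) := by gcongr
        _ ≤ L * (D ^ (-m) * (Real.log D + 1 / β * Real.log D))
            + E * (D ^ (-m) * Real.log D) := by
            gcongr
            exact le_mul_of_one_le_right (by positivity) hlog
        _ = _ := by ring

end
end

section
/- Let β > 1 and r > 0, and set δ := 1 + β(2r − 1) (so δ + β = 1 + 2βr > 1). Let (λ_k)_{k≥1} and (c_k²)_{k≥1} be sequences of positive reals with λ_k ≍ k^{−β} and c_k² ≍ k^{−δ} (i.e. bounded above and below by constant multiples). Define B(κ) := κ² Σ_{k=1}^∞ c_k² λ_k / (λ_k + κ)² for κ > 0. Then: (i) if r ≠ 1, there exist constants 0 < A ≤ B' and κ₀ > 0 such that A κ^{2 min(r,1)} ≤ B(κ) ≤ B' κ^{2 min(r,1)} for all 0 < κ ≤ κ₀; (ii) if r = 1, B(κ) ≍ κ² log(1/κ) as κ → 0⁺. -/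
noncomputable section

/-! Writing `x = k + 1`, the `k`-th summand of `B(κ)` is comparable to
`κ² x^(-1-2βr) / (x^(-β) + κ)²`, hence to `κ² x^(-1+2β(1-r))` while `x^(-β) ≥ κ` and to
`x^(-1-2βr)` once `x^(-β) ≤ κ`; as upper bounds both hold for every `x`
(`term_le_head`, `term_le_tail`, `head_le_term`, `tail_le_term`).
The two regimes meet at `x = M := κ^(-1/β)`.

* `r > 1`: the head bound is summable uniformly in `κ`, and the first summand alone has order `κ²`.
* `r < 1`: head and tail both contribute `κ^(2r)`, and the block `M ≲ x ≲ 4M` already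
  has that order.
* `r = 1`: the head is `κ²` times a harmonic sum up to `M`, i.e. of order `κ² log(1/κ)`, while the
  tail only contributes `O(κ²)`.

The power sums are estimated by telescoping `(x+1)^s - x^s` with the mean value theorem
(`sum_tail_le`, `sum_head_le`). -/

namespace PowerLawBias

/-! ### Power sums by telescoping -/

/-- Powers vary by a bounded factor on `[x, x + 1]`, uniformly in `x ≥ 1`, whatever the sign of the
exponent. -/
lemma rpow_near {x y q : ℝ} (hx : 1 ≤ x) (hxy : x ≤ y) (hy : y ≤ x + 1) :
    (2 : ℝ) ^ (-|q|) * x ^ q ≤ y ^ q := by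
  have hx0 : 0 < x := by linarith
  rcases le_or_gt 0 q with hq | hq
  · have h1 : x ^ q ≤ y ^ q := Real.rpow_le_rpow hx0.le hxy hq
    have h2 : (2 : ℝ) ^ (-|q|) ≤ 1 :=
      Real.rpow_le_one_of_one_le_of_nonpos (by norm_num) (by simp)
    have h3 : 0 ≤ x ^ q := by positivity
    nlinarith
  · rw [abs_of_neg hq, neg_neg, ← Real.mul_rpow (by norm_num) hx0.le]
    exact Real.rpow_le_rpow_of_nonpos (by linarith) (by linarith) hq.le

lemma exists_slope {x : ℝ} (s : ℝ) (hx : 1 ≤ x) :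
    ∃ y, x ≤ y ∧ y ≤ x + 1 ∧ s * y ^ (s - 1) = (x + 1) ^ s - x ^ s := by
  obtain ⟨y, hy, h⟩ := exists_hasDerivAt_eq_slope (fun y : ℝ => y ^ s)
    (fun y => s * y ^ (s - 1)) (show x < x + 1 by linarith)
    (fun y hy => (Real.continuousAt_rpow_const y s
      (Or.inl (by have := hy.1; intro h; linarith))).continuousWithinAt)
    (fun y hy => Real.hasDerivAt_rpow_const
      (Or.inl (by have := hy.1; intro h; linarith)))
  refine ⟨y, hy.1.le, hy.2.le, ?_⟩
  rw [h]; simp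

lemma sum_head_le {s : ℝ} (hs : 0 < s) :
    ∃ C : ℝ, 0 < C ∧ ∀ N : ℕ,
      ∑ k ∈ Finset.range N, ((k : ℝ) + 1) ^ (s - 1) ≤ C * ((N : ℝ) + 1) ^ s := by
  set d : ℝ := s * (2 : ℝ) ^ (-|s - 1|) with hd
  have hd0 : 0 < d := by positivity
  refine ⟨d⁻¹, by positivity, fun N => ?_⟩
  rw [inv_mul_eq_div, le_div_iff₀ hd0]
  induction N with
  | zero => simp
  | succ n ih =>
    rw [Finset.sum_range_succ, add_mul]
    have hx : (1 : ℝ) ≤ (n : ℝ) + 1 := by have := n.cast_nonneg (α := ℝ); linarith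
    obtain ⟨y, h1, h2, h3⟩ := exists_slope s hx
    have h4 := mul_le_mul_of_nonneg_left (rpow_near (q := s - 1) hx h1 h2) hs.le
    push_cast
    rw [hd] at ih ⊢
    linarith

lemma sum_tail_le {s : ℝ} (hs : 0 < s) :
    ∃ C : ℝ, 0 < C ∧ ∀ N n : ℕ,
      ∑ i ∈ Finset.range n, (((N + i : ℕ) : ℝ) + 1) ^ (-s - 1) ≤ C * ((N : ℝ) + 1) ^ (-s) := by
  set d : ℝ := s * (2 : ℝ) ^ (-|-s - 1|) with hd
  have hd0 : 0 < d := by positivity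
  refine ⟨d⁻¹, by positivity, fun N n => ?_⟩
  rw [inv_mul_eq_div, le_div_iff₀ hd0]
  -- the telescoped remainder `(N+n+1)^(-s)` is kept so that the induction closes
  have key : (∑ i ∈ Finset.range n, (((N + i : ℕ) : ℝ) + 1) ^ (-s - 1)) * d
      ≤ ((N : ℝ) + 1) ^ (-s) - (((N + n : ℕ) : ℝ) + 1) ^ (-s) := by
    induction n with
    | zero => simp
    | succ n ih =>
      rw [Finset.sum_range_succ, add_mul]
      have hx : (1 : ℝ) ≤ ((N + n : ℕ) : ℝ) + 1 := by
        have := (N + n).cast_nonneg (α := ℝ); linarith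
      obtain ⟨y, h1, h2, h3⟩ := exists_slope (-s) hx
      have h4 := mul_le_mul_of_nonneg_left (rpow_near (q := -s - 1) hx h1 h2) hs.le
      rw [← add_assoc, Nat.cast_add_one]
      rw [hd] at ih ⊢
      linarith
  have : 0 ≤ (((N + n : ℕ) : ℝ) + 1) ^ (-s) := by positivity
  linarith

/-! ### Bounds on a single summand -/

section Term

variable {β r x l c κ c₁ c₂ c₃ c₄ : ℝ}

lemma coeff_mul (hx : 0 < x) :
    x ^ (-(1 + β * (2 * r - 1))) * x ^ (-β) = x ^ (-(2 * β * r) - 1) := by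
  rw [← Real.rpow_add hx]; congr 1; ring

lemma head_eq (hx : 0 < x) :
    x ^ (-(2 * β * r) - 1) = x ^ (2 * β * (1 - r) - 1) * (x ^ (-β)) ^ 2 := by
  rw [← Real.rpow_natCast, ← Real.rpow_mul hx.le, ← Real.rpow_add hx]
  congr 1; push_cast; ring

lemma num_le (hx : 0 < x) (hl : 0 < l) (hc₄ : 0 < c₄)
    (hl2 : l ≤ c₂ * x ^ (-β)) (hc2 : c ≤ c₄ * x ^ (-(1 + β * (2 * r - 1)))) :
    c * l ≤ c₄ * c₂ * x ^ (-(2 * β * r) - 1) := by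
  rw [← coeff_mul hx]
  calc c * l ≤ (c₄ * x ^ (-(1 + β * (2 * r - 1)))) * (c₂ * x ^ (-β)) :=
        mul_le_mul hc2 hl2 hl.le (by positivity)
    _ = _ := by ring

lemma le_num (hx : 0 < x) (hc : 0 < c) (hc₁ : 0 < c₁)
    (hl1 : c₁ * x ^ (-β) ≤ l) (hc1 : c₃ * x ^ (-(1 + β * (2 * r - 1))) ≤ c) :
    c₃ * c₁ * x ^ (-(2 * β * r) - 1) ≤ c * l := by
  rw [← coeff_mul hx]
  calc _ = (c₃ * x ^ (-(1 + β * (2 * r - 1)))) * (c₁ * x ^ (-β)) := by ring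
    _ ≤ _ := mul_le_mul hc1 hl1 (by positivity) hc.le

lemma term_le_head (hx : 0 < x) (hl : 0 < l) (hκ : 0 < κ)
    (hc₁ : 0 < c₁) (hc₂ : 0 < c₂) (hc₄ : 0 < c₄)
    (hl1 : c₁ * x ^ (-β) ≤ l) (hl2 : l ≤ c₂ * x ^ (-β))
    (hc2 : c ≤ c₄ * x ^ (-(1 + β * (2 * r - 1)))) :
    c * l / (l + κ) ^ 2 ≤ c₄ * c₂ / c₁ ^ 2 * x ^ (2 * β * (1 - r) - 1) := by
  have hn := num_le (r := r) hx hl hc₄ hl2 hc2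
  have ha : 0 < x ^ (-β) := by positivity
  have hd : (c₁ * x ^ (-β)) ^ 2 ≤ (l + κ) ^ 2 :=
    pow_le_pow_left₀ (by positivity) (by linarith) 2
  calc c * l / (l + κ) ^ 2
      ≤ (c₄ * c₂ * x ^ (-(2 * β * r) - 1)) / (c₁ * x ^ (-β)) ^ 2 :=
        div_le_div₀ (by positivity) hn (by positivity) hd
    _ = _ := by rw [head_eq hx]; field_simp

lemma term_le_tail (hx : 0 < x) (hl : 0 < l) (hκ : 0 < κ) (hc₂ : 0 < c₂) (hc₄ : 0 < c₄)
    (hl2 : l ≤ c₂ * x ^ (-β)) (hc2 : c ≤ c₄ * x ^ (-(1 + β * (2 * r - 1)))) :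
    c * l / (l + κ) ^ 2 ≤ c₄ * c₂ / κ ^ 2 * x ^ (-(2 * β * r) - 1) := by
  have hn := num_le (r := r) hx hl hc₄ hl2 hc2
  have hd : κ ^ 2 ≤ (l + κ) ^ 2 := pow_le_pow_left₀ hκ.le (by linarith) 2
  calc c * l / (l + κ) ^ 2
      ≤ (c₄ * c₂ * x ^ (-(2 * β * r) - 1)) / κ ^ 2 :=
        div_le_div₀ (by positivity) hn (by positivity) hd
    _ = _ := by ring

lemma head_le_term (hx : 0 < x) (hl : 0 < l) (hc : 0 < c) (hκ : 0 < κ)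
    (hc₁ : 0 < c₁) (hc₂ : 0 < c₂) (hc₃ : 0 < c₃)
    (hl1 : c₁ * x ^ (-β) ≤ l) (hl2 : l ≤ c₂ * x ^ (-β))
    (hc1 : c₃ * x ^ (-(1 + β * (2 * r - 1))) ≤ c) (hxκ : κ ≤ x ^ (-β)) :
    c₃ * c₁ / (c₂ + 1) ^ 2 * x ^ (2 * β * (1 - r) - 1) ≤ c * l / (l + κ) ^ 2 := by
  have hn := le_num (r := r) hx hc hc₁ hl1 hc1
  have ha : 0 < x ^ (-β) := by positivity
  have hd : (l + κ) ^ 2 ≤ ((c₂ + 1) * x ^ (-β)) ^ 2 :=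
    pow_le_pow_left₀ (by positivity) (by linarith) 2
  calc _ = (c₃ * c₁ * x ^ (-(2 * β * r) - 1)) / ((c₂ + 1) * x ^ (-β)) ^ 2 := by
        rw [head_eq hx]; field_simp
    _ ≤ _ := div_le_div₀ (by positivity) hn (by positivity) hd

lemma tail_le_term (hx : 0 < x) (hl : 0 < l) (hc : 0 < c) (hκ : 0 < κ)
    (hc₁ : 0 < c₁) (hc₂ : 0 < c₂)
    (hl1 : c₁ * x ^ (-β) ≤ l) (hl2 : l ≤ c₂ * x ^ (-β))
    (hc1 : c₃ * x ^ (-(1 + β * (2 * r - 1))) ≤ c) (hxκ : x ^ (-β) ≤ κ) :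
    c₃ * c₁ / (c₂ + 1) ^ 2 / κ ^ 2 * x ^ (-(2 * β * r) - 1) ≤ c * l / (l + κ) ^ 2 := by
  have hn := le_num (r := r) hx hc hc₁ hl1 hc1
  have hd : (l + κ) ^ 2 ≤ ((c₂ + 1) * κ) ^ 2 :=
    pow_le_pow_left₀ (by positivity) (by nlinarith) 2
  calc _ = (c₃ * c₁ * x ^ (-(2 * β * r) - 1)) / ((c₂ + 1) * κ) ^ 2 := by
        field_simp
    _ ≤ _ := div_le_div₀ (by positivity) hn (by positivity) hd

end Term

/-! ### Assembling the estimates -/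

/-- Two-sided comparability on `(0, κ₀]` only needs separate constants: enlarging the upper one
to `max A U` makes the pair ordered. -/
lemma combine {F f : ℝ → ℝ} {A U κ₀ : ℝ} (hA : 0 < A) (hκ₀ : 0 < κ₀)
    (h : ∀ κ, 0 < κ → κ ≤ κ₀ → 0 ≤ f κ ∧ A * f κ ≤ F κ ∧ F κ ≤ U * f κ) :
    ∃ A B' κ₀ : ℝ, 0 < A ∧ A ≤ B' ∧ 0 < κ₀ ∧
      ∀ κ : ℝ, 0 < κ → κ ≤ κ₀ → A * f κ ≤ F κ ∧ F κ ≤ B' * f κ := by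
  refine ⟨A, max A U, κ₀, hA, le_max_left _ _, hκ₀, fun κ h1 h2 => ?_⟩
  obtain ⟨h3, h4, h5⟩ := h κ h1 h2
  exact ⟨h4, h5.trans (mul_le_mul_of_nonneg_right (le_max_right _ _) h3)⟩

/-- A nonnegative series whose terms are bounded by `H u_k` and by `T v_k` is bounded by using the
first bound for `k < N` and the second from `N` on. -/
lemma tsum_split_le {t u v : ℕ → ℝ} {H T V : ℝ} (N : ℕ) (ht : ∀ k, 0 ≤ t k)
    (hu : ∀ k, t k ≤ H * u k) (hv : ∀ k, t k ≤ T * v k) (hT : 0 ≤ T)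
    (hV : ∀ n, ∑ i ∈ Finset.range n, v (N + i) ≤ V) :
    ∑' k, t k ≤ H * ∑ k ∈ Finset.range N, u k + T * V := by
  refine Real.tsum_le_of_sum_range_le ht fun n => ?_
  calc ∑ k ∈ Finset.range n, t k ≤ ∑ k ∈ Finset.range (N + n), t k :=
        Finset.sum_le_sum_of_subset_of_nonneg
          (Finset.range_mono (Nat.le_add_left n N)) (fun k _ _ => ht k)
    _ = ∑ k ∈ Finset.range N, t k + ∑ i ∈ Finset.range n, t (N + i) :=
        Finset.sum_range_add _ _ _
    _ ≤ _ := by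
        refine add_le_add ?_ ?_
        · rw [Finset.mul_sum]; exact Finset.sum_le_sum fun k _ => hu k
        · refine le_trans (Finset.sum_le_sum fun i _ => hv (N + i)) ?_
          rw [← Finset.mul_sum]; exact mul_le_mul_of_nonneg_left (hV n) hT

end PowerLawBias

open PowerLawBias

/-- Bias functional asymptotics under capacity condition
`λ_k ≍ k^{−β}` (`β > 1`) and source condition `c_k² ≍ k^{−δ}` with
`δ := 1 + β(2r − 1)`, `r > 0` (sequences indexed so that `lam k = λ_{k+1}`,
`csq k = c_{k+1}²`): with `B(κ) := κ² ∑_{k≥1} c_k² λ_k/(λ_k + κ)²`,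
(i) if `r ≠ 1` then `B(κ) ≍ κ^{2 min(r,1)}` as `κ → 0⁺`, and
(ii) if `r = 1` then `B(κ) ≍ κ² log(1/κ)` as `κ → 0⁺`. -/
theorem powerLaw_bias_asymptotics (β r : ℝ) (hβ : 1 < β) (hr : 0 < r)
    (lam csq : ℕ → ℝ) (hlampos : ∀ k, 0 < lam k) (hcpos : ∀ k, 0 < csq k)
    (c₁ c₂ c₃ c₄ : ℝ) (hc₁ : 0 < c₁) (hc₁₂ : c₁ ≤ c₂) (hc₃ : 0 < c₃) (hc₃₄ : c₃ ≤ c₄)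
    (hlamlow : ∀ k : ℕ, c₁ * ((k : ℝ) + 1) ^ (-β) ≤ lam k)
    (hlamhigh : ∀ k : ℕ, lam k ≤ c₂ * ((k : ℝ) + 1) ^ (-β))
    (hclow : ∀ k : ℕ, c₃ * ((k : ℝ) + 1) ^ (-(1 + β * (2 * r - 1))) ≤ csq k)
    (hchigh : ∀ k : ℕ, csq k ≤ c₄ * ((k : ℝ) + 1) ^ (-(1 + β * (2 * r - 1)))) :
    let Bfun : ℝ → ℝ := fun κ => κ ^ 2 * ∑' k : ℕ, csq k * lam k / (lam k + κ) ^ 2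
    (r ≠ 1 →
      ∃ A B' κ₀ : ℝ, 0 < A ∧ A ≤ B' ∧ 0 < κ₀ ∧
        ∀ κ : ℝ, 0 < κ → κ ≤ κ₀ →
          A * κ ^ (2 * min r 1) ≤ Bfun κ ∧ Bfun κ ≤ B' * κ ^ (2 * min r 1)) ∧
    (r = 1 →
      ∃ A B' κ₀ : ℝ, 0 < A ∧ A ≤ B' ∧ 0 < κ₀ ∧
        ∀ κ : ℝ, 0 < κ → κ ≤ κ₀ →
          A * (κ ^ 2 * Real.log (1 / κ)) ≤ Bfun κ ∧
            Bfun κ ≤ B' * (κ ^ 2 * Real.log (1 / κ))) := by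
  intro Bfun
  have hc₂ : 0 < c₂ := by linarith
  have hc₄ : 0 < c₄ := by linarith
  have hβ0 : 0 < β := by linarith
  have hx : ∀ k : ℕ, (0 : ℝ) < (k : ℝ) + 1 := fun k => by positivity
  have hβr : 0 < 2 * β * r := by positivity
  obtain ⟨C, hC, hCtail⟩ := sum_tail_le hβr
  set K : ℝ := c₄ * c₂ / c₁ ^ 2 with hK
  have hK0 : 0 < K := by positivity
  set L : ℝ := c₃ * c₁ / (c₂ + 1) ^ 2 with hL
  have hL0 : 0 < L := by positivity
  have tnn : ∀ κ : ℝ, 0 < κ → ∀ k, 0 ≤ csq k * lam k / (lam k + κ) ^ 2 := fun κ hκ k => by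
    have := hlampos k
    have := hcpos k
    positivity
  have hhead : ∀ κ : ℝ, 0 < κ → ∀ k : ℕ, csq k * lam k / (lam k + κ) ^ 2
      ≤ K * ((k : ℝ) + 1) ^ (2 * β * (1 - r) - 1) := fun κ hκ k =>
    term_le_head (hx k) (hlampos k) hκ hc₁ hc₂ hc₄ (hlamlow k) (hlamhigh k) (hchigh k)
  have htail : ∀ κ : ℝ, 0 < κ → ∀ k : ℕ, csq k * lam k / (lam k + κ) ^ 2
      ≤ c₄ * c₂ / κ ^ 2 * ((k : ℝ) + 1) ^ (-(2 * β * r) - 1) := fun κ hκ k =>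
    term_le_tail (hx k) (hlampos k) hκ hc₂ hc₄ (hlamhigh k) (hchigh k)
  have hsum : ∀ κ : ℝ, 0 < κ →
      Summable fun k => csq k * lam k / (lam k + κ) ^ 2 := fun κ hκ => by
    refine summable_of_sum_range_le (c := c₄ * c₂ / κ ^ 2 * (C * 1)) (tnn κ hκ) fun n => ?_
    refine (Finset.sum_le_sum fun k _ => htail κ hκ k).trans ?_
    rw [← Finset.mul_sum]
    refine mul_le_mul_of_nonneg_left ?_ (by positivity)
    simpa using hCtail 0 n
  have hsplit : ∀ κ : ℝ, 0 < κ → ∀ N : ℕ, Bfun κ ≤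
      κ ^ 2 * (K * ∑ k ∈ Finset.range N, ((k : ℝ) + 1) ^ (2 * β * (1 - r) - 1))
        + c₄ * c₂ * C * ((N : ℝ) + 1) ^ (-(2 * β * r)) := fun κ hκ N => by
    have h := tsum_split_le N (tnn κ hκ) (hhead κ hκ) (htail κ hκ) (by positivity) (hCtail N)
    calc Bfun κ ≤ κ ^ 2 * _ := mul_le_mul_of_nonneg_left h (by positivity)
      _ = _ := by field_simp
  -- `M = κ ^ (-1/β)` is the crossover index, where `x ^ (-β) = κ`
  have hMpow : ∀ κ : ℝ, 0 < κ → ∀ p : ℝ, (κ ^ (-1 / β)) ^ (β * p) = κ ^ (-p) := fun κ hκ p => by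
    rw [← Real.rpow_mul hκ.le]; congr 1; field_simp
  have hMβ : ∀ κ : ℝ, 0 < κ → (κ ^ (-1 / β)) ^ (-β) = κ := fun κ hκ => by
    have := hMpow κ hκ (-1)
    simpa using this
  have hM1 : ∀ κ : ℝ, 0 < κ → κ ≤ 1 → 1 ≤ κ ^ (-1 / β) := fun κ hκ h1 =>
    Real.one_le_rpow_of_pos_of_le_one_of_nonpos hκ h1
      (by rw [neg_div]; have : 0 < 1 / β := by positivity
          linarith)
  have hMr : ∀ κ : ℝ, 0 < κ → (κ ^ (-1 / β)) ^ (-(2 * β * r)) = κ ^ (2 * r) := fun κ hκ => by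
    have := hMpow κ hκ (-(2 * r))
    rw [neg_neg] at this
    rw [← this]; congr 1; ring
  refine ⟨fun hr1 => ?_, fun hr1 => ?_⟩
  · rcases lt_or_gt_of_ne hr1 with hlt | hgt
    · -- `r < 1`: the block `P ≤ k < 2P` with `P = ⌊M⌋ + 1` gives the lower bound
      rw [min_eq_left hlt.le]
      have hs : 0 < 2 * β * (1 - r) := mul_pos (by positivity) (by linarith)
      obtain ⟨D, hD, hDhead⟩ := sum_head_le hs
      refine combine (A := L * (4 : ℝ) ^ (-(2 * β * r) - 1))
        (U := K * D * 2 ^ (2 * β * (1 - r)) + c₄ * c₂ * C) (by positivity) one_pos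
        fun κ hκ hκ1 => ⟨by positivity, ?_, ?_⟩
      · set M := κ ^ (-1 / β) with hM
        have hM1' : 1 ≤ M := hM1 κ hκ hκ1
        have hM0 : 0 < M := by linarith
        set P := ⌊M⌋₊ + 1 with hP
        have hPM : M ≤ (P : ℝ) := by
          rw [hP]; push_cast; exact (Nat.lt_floor_add_one M).le
        have hPM2 : (P : ℝ) ≤ 2 * M := by
          rw [hP]; push_cast; linarith [Nat.floor_le hM0.le]
        have hterm : ∀ i ∈ Finset.range P,
            L / κ ^ 2 * (4 * M) ^ (-(2 * β * r) - 1)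
              ≤ csq (P + i) * lam (P + i) / (lam (P + i) + κ) ^ 2 := fun i hi => by
          have hiP : ((i : ℝ) + 1) ≤ P := by exact_mod_cast Finset.mem_range.1 hi
          have hi0 : (0 : ℝ) ≤ i := i.cast_nonneg
          refine le_trans ?_ (tail_le_term (r := r) (hx (P + i)) (hlampos _) (hcpos _) hκ hc₁ hc₂
            (hlamlow _) (hlamhigh _) (hclow _) ?_)
          · refine mul_le_mul_of_nonneg_left ?_ (by positivity)
            exact Real.rpow_le_rpow_of_nonpos (hx _) (by push_cast; linarith) (by linarith)
          · calc (((P + i : ℕ) : ℝ) + 1) ^ (-β) ≤ M ^ (-β) :=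
                Real.rpow_le_rpow_of_nonpos hM0 (by push_cast; linarith) (by linarith)
              _ = κ := hMβ κ hκ
        have hS : ∑ i ∈ Finset.range P, csq (P + i) * lam (P + i) / (lam (P + i) + κ) ^ 2
            ≤ ∑' k, csq k * lam k / (lam k + κ) ^ 2 := by
          have h1 := (hsum κ hκ).sum_le_tsum (Finset.range (P + P)) (fun k _ => tnn κ hκ k)
          rw [Finset.sum_range_add] at h1
          have h2 : 0 ≤ ∑ k ∈ Finset.range P, csq k * lam k / (lam k + κ) ^ 2 :=
            Finset.sum_nonneg fun k _ => tnn κ hκ k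
          linarith
        have h3 := Finset.card_nsmul_le_sum _ _ _ hterm
        rw [Finset.card_range, nsmul_eq_mul] at h3
        have h4 : M * M ^ (-(2 * β * r) - 1) = κ ^ (2 * r) := by
          rw [← hMr κ hκ, ← hM, Real.rpow_sub_one hM0.ne']; field_simp
        calc L * (4 : ℝ) ^ (-(2 * β * r) - 1) * κ ^ (2 * r)
            = κ ^ 2 * (M * (L / κ ^ 2 * (4 * M) ^ (-(2 * β * r) - 1))) := by
              rw [Real.mul_rpow (by norm_num) hM0.le, ← h4]; field_simp
          _ ≤ κ ^ 2 * (P * (L / κ ^ 2 * (4 * M) ^ (-(2 * β * r) - 1))) := by gcongr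
          _ ≤ Bfun κ := mul_le_mul_of_nonneg_left (h3.trans hS) (by positivity)
      · set M := κ ^ (-1 / β) with hM
        have hM1' : 1 ≤ M := hM1 κ hκ hκ1
        have hM0 : 0 < M := by linarith
        have hN1 : M ≤ (⌊M⌋₊ : ℝ) + 1 := (Nat.lt_floor_add_one M).le
        have hN2 : (⌊M⌋₊ : ℝ) + 1 ≤ 2 * M := by linarith [Nat.floor_le hM0.le]
        have h1 : κ ^ 2 * M ^ (2 * β * (1 - r)) = κ ^ (2 * r) := by
          have := hMpow κ hκ (2 * (1 - r))
          rw [show 2 * β * (1 - r) = β * (2 * (1 - r)) by ring, this, ← Real.rpow_natCast,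
            ← Real.rpow_add hκ]
          congr 1; push_cast; ring
        calc Bfun κ ≤ _ := hsplit κ hκ ⌊M⌋₊
          _ ≤ κ ^ 2 * (K * (D * (2 * M) ^ (2 * β * (1 - r))))
              + c₄ * c₂ * C * M ^ (-(2 * β * r)) := by
            refine add_le_add ?_ ?_
            · refine mul_le_mul_of_nonneg_left (mul_le_mul_of_nonneg_left
                ((hDhead _).trans ?_) hK0.le) (by positivity)
              exact mul_le_mul_of_nonneg_left (Real.rpow_le_rpow (hx _).le hN2 hs.le) hD.le
            · exact mul_le_mul_of_nonneg_left
                (Real.rpow_le_rpow_of_nonpos hM0 hN1 (by linarith)) (by positivity)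
          _ = _ := by
            rw [hMr κ hκ, Real.mul_rpow (by norm_num) hM0.le, ← h1]; ring
    · -- `r > 1`: the head bound is summable and the summand `k = 0` gives the lower bound
      rw [min_eq_right hgt.le]
      have hs : 0 < 2 * β * (r - 1) := mul_pos (by positivity) (by linarith)
      obtain ⟨D, hD, hDtail⟩ := sum_tail_le hs
      refine combine (A := L) (U := K * D) hL0 one_pos fun κ hκ hκ1 => ?_
      have h2 : κ ^ (2 * (1 : ℝ)) = κ ^ 2 := by
        rw [mul_one]; exact_mod_cast Real.rpow_natCast κ 2
      rw [h2]
      refine ⟨by positivity, ?_, ?_⟩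
      · have h0 := head_le_term (r := r) (hx 0) (hlampos 0) (hcpos 0) hκ hc₁ hc₂ hc₃
          (hlamlow 0) (hlamhigh 0) (hclow 0) (by simpa using hκ1)
        have h1 := (hsum κ hκ).le_tsum 0 (fun k _ => tnn κ hκ k)
        rw [mul_comm]
        refine mul_le_mul_of_nonneg_left (le_trans ?_ h1) (by positivity)
        simpa using h0
      · have h1 : ∑' k, csq k * lam k / (lam k + κ) ^ 2 ≤ K * D := by
          refine Real.tsum_le_of_sum_range_le (tnn κ hκ) fun n => ?_
          refine (Finset.sum_le_sum fun k _ => hhead κ hκ k).trans ?_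
          rw [← Finset.mul_sum]
          refine mul_le_mul_of_nonneg_left ?_ hK0.le
          have := hDtail 0 n
          rw [show -(2 * β * (r - 1)) = 2 * β * (1 - r) by ring] at this
          simpa using this
        rw [mul_comm (K * D)]
        exact mul_le_mul_of_nonneg_left h1 (by positivity)
  · subst hr1
    have hharm : ∀ N : ℕ, ∑ k ∈ Finset.range N, ((k : ℝ) + 1) ^ (2 * β * (1 - 1) - 1)
        = (harmonic N : ℝ) := fun N => by
      rw [harmonic]; push_cast
      refine Finset.sum_congr rfl fun k _ => ?_
      rw [sub_self, mul_zero, zero_sub, Real.rpow_neg_one]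
    -- `κ ≤ e⁻¹` makes `log (1/κ) ≥ 1`, which absorbs the `O(κ²)` contributions
    refine combine (A := L / β) (U := K * (1 + 1 / β) + c₄ * c₂ * C) (κ₀ := Real.exp (-1))
      (by positivity) (Real.exp_pos _) fun κ hκ hκ1 => ?_
    have hlog : 1 ≤ Real.log (1 / κ) := by
      rw [one_div, Real.log_inv]
      have := Real.log_le_log hκ hκ1
      rw [Real.log_exp] at this
      linarith
    have hκle : κ ≤ 1 := hκ1.trans (Real.exp_le_one_iff.2 (by norm_num))
    set M := κ ^ (-1 / β) with hM
    have hM1' : 1 ≤ M := hM1 κ hκ hκle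
    have hM0 : 0 < M := by linarith
    have hlogM : Real.log M = Real.log (1 / κ) / β := by
      rw [hM, Real.log_rpow hκ, one_div, Real.log_inv]; ring
    have hN1 : M ≤ (⌊M⌋₊ : ℝ) + 1 := (Nat.lt_floor_add_one M).le
    have hNM : (⌊M⌋₊ : ℝ) ≤ M := Nat.floor_le hM0.le
    refine ⟨by positivity, ?_, ?_⟩
    · have hterm : L * ∑ k ∈ Finset.range ⌊M⌋₊, ((k : ℝ) + 1) ^ (2 * β * (1 - 1) - 1)
          ≤ ∑' k, csq k * lam k / (lam k + κ) ^ 2 := by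
        refine le_trans ?_ ((hsum κ hκ).sum_le_tsum (Finset.range ⌊M⌋₊) (fun k _ => tnn κ hκ k))
        rw [Finset.mul_sum]
        refine Finset.sum_le_sum fun k hk => ?_
        have hkN : ((k : ℝ) + 1) ≤ (⌊M⌋₊ : ℝ) := by exact_mod_cast Finset.mem_range.1 hk
        refine head_le_term (hx k) (hlampos k) (hcpos k) hκ hc₁ hc₂ hc₃
          (hlamlow k) (hlamhigh k) (hclow k) ?_
        calc κ = M ^ (-β) := (hMβ κ hκ).symm
          _ ≤ _ := Real.rpow_le_rpow_of_nonpos (hx k) (hkN.trans hNM) (by linarith)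
      rw [hharm] at hterm
      have h1 : Real.log (1 / κ) / β ≤ (harmonic ⌊M⌋₊ : ℝ) := by
        rw [← hlogM]
        refine le_trans (Real.log_le_log hM0 hN1) ?_
        exact_mod_cast log_add_one_le_harmonic ⌊M⌋₊
      calc L / β * (κ ^ 2 * Real.log (1 / κ)) = κ ^ 2 * (L * (Real.log (1 / κ) / β)) := by ring
        _ ≤ κ ^ 2 * (L * (harmonic ⌊M⌋₊ : ℝ)) := by gcongr
        _ ≤ Bfun κ := mul_le_mul_of_nonneg_left hterm (by positivity)
    · have h0 := hsplit κ hκ ⌊M⌋₊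
      rw [hharm] at h0
      have h1 : (harmonic ⌊M⌋₊ : ℝ) ≤ (1 + 1 / β) * Real.log (1 / κ) := by
        have h2 := harmonic_le_one_add_log ⌊M⌋₊
        have h3 : Real.log (⌊M⌋₊ : ℝ) ≤ Real.log M :=
          Real.log_le_log (by exact_mod_cast Nat.floor_pos.2 hM1') hNM
        rw [hlogM] at h3
        calc (harmonic ⌊M⌋₊ : ℝ) ≤ 1 + Real.log (1 / κ) / β := by linarith
          _ ≤ Real.log (1 / κ) + Real.log (1 / κ) / β := by linarith
          _ = _ := by ring
      have h4 : ((⌊M⌋₊ : ℝ) + 1) ^ (-(2 * β * 1)) ≤ κ ^ 2 * Real.log (1 / κ) := by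
        calc _ ≤ M ^ (-(2 * β * 1)) := Real.rpow_le_rpow_of_nonpos hM0 hN1 (by linarith)
          _ = κ ^ 2 := by rw [hMr κ hκ, mul_one]; exact_mod_cast Real.rpow_natCast κ 2
          _ ≤ _ := le_mul_of_one_le_right (by positivity) hlog
      calc Bfun κ ≤ _ := h0
        _ ≤ κ ^ 2 * (K * ((1 + 1 / β) * Real.log (1 / κ)))
            + c₄ * c₂ * C * (κ ^ 2 * Real.log (1 / κ)) := by gcongr
        _ = _ := by ring

end
end

section
/- Let β > 1 and let λ_k := k^{−β} for k ≥ 1, and define df₁(t) := Σ_{k=1}^∞ λ_k/(λ_k + t) for t > 0 (a convergent series). For each real T ≥ 1 and λ > 0, let κ(λ, T) be the unique positive solution of κ − λ = κ · df₁(κ)/T. Fix a real ℓ ≥ 0 with ℓ ≠ β and a constant a > 0. Then κ(a T^{−ℓ}, T) ≍ T^{−min(ℓ, β)} as T → ∞; that is, there exist constants 0 < A ≤ B and T₀ such that A T^{−min(ℓ,β)} ≤ κ(aT^{−ℓ}, T) ≤ B T^{−min(ℓ,β)} for all T ≥ T₀. -/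
/-!
Write `df(t) = ∑ k, λ_k / (λ_k + t)` and `κ = κ(λ, T)`, so that `κ - λ = κ * df(κ) / T`. Two estimates
of `df` at the scale `t ≍ T ^ (-β)` give everything:

* if `t ≤ (3T) ^ (-β)` then the first `⌈2T⌉` terms of `df(t)` are at least `1/2`, so `T ≤ df(t)`
  (`le_df_of_small`); since `λ > 0` forces `df(κ) < T`, this yields `κ ≥ (3T) ^ (-β)`;
* there is `m = m(β)` such that `df(t) ≤ T / 2` once `t ≥ (m / T) ^ β` (`df_le_of_large`, by comparing
  the series with the integral of `(1 + v) ^ (-β)`); hence `κ ≤ (m / T) ^ β` or `κ ≤ 2λ`.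

Together with the trivial bound `κ ≥ λ`, this shows `κ ≍ max(λ, T ^ (-β))`, and
`max (T ^ (-ℓ)) (T ^ (-β)) = T ^ (-min ℓ β)`.
-/

noncomputable section

/-- The degrees-of-freedom function `df₁` of the spectrum `(k + 1) ^ (-β)`, `k : ℕ`. -/
def powerLawDf (β t : ℝ) : ℝ :=
  ∑' k : ℕ, (((k : ℝ) + 1) ^ (-β)) / (((k : ℝ) + 1) ^ (-β) + t)

lemma summable_powerLawDf {β t : ℝ} (hβ : 1 < β) (ht : 0 < t) :
    Summable fun k : ℕ => (((k : ℝ) + 1) ^ (-β)) / (((k : ℝ) + 1) ^ (-β) + t) := by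
  have h1 : Summable fun k : ℕ => ((k : ℝ) + 1) ^ (-β) := by
    have := (summable_nat_add_iff 1).2 (Real.summable_nat_rpow.2 (by linarith : -β < -1))
    simpa using this
  refine Summable.of_nonneg_of_le (fun k => by positivity) (fun k => ?_) (h1.div_const t)
  have : 0 < ((k : ℝ) + 1) ^ (-β) := by positivity
  gcongr
  linarith

lemma powerLawDf_nonneg {β t : ℝ} (ht : 0 < t) : 0 ≤ powerLawDf β t :=
  tsum_nonneg fun k => by positivity

lemma le_df_of_small {β t T : ℝ} (hβ : 1 < β) (ht : 0 < t) (hT : 1 ≤ T)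
    (h : t ≤ (3 * T) ^ (-β)) : T ≤ powerLawDf β t := by
  have hN := Nat.le_ceil (2 * T)
  have hN' := Nat.ceil_lt_add_one (by linarith : 0 ≤ 2 * T)
  set N := ⌈2 * T⌉₊
  have h1 : ∑ k ∈ Finset.range N, (1 / 2 : ℝ) ≤ powerLawDf β t := by
    refine le_trans (Finset.sum_le_sum fun k hk => ?_)
      ((summable_powerLawDf hβ ht).sum_le_tsum (Finset.range N) fun k _ => by positivity)
    have hk' : (k : ℝ) + 1 ≤ N := by exact_mod_cast Finset.mem_range.1 hk
    have h2 : (3 * T) ^ (-β) ≤ ((k : ℝ) + 1) ^ (-β) :=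
      Real.rpow_le_rpow_of_nonpos (by positivity) (by linarith) (by linarith)
    rw [div_le_div_iff₀ (by norm_num) (by positivity)]
    linarith
  simp only [Finset.sum_const, Finset.card_range, nsmul_eq_mul] at h1
  linarith

/-- Comparison with the integral of the integrable function `(1 + |v|) ^ (-β)`, after the change of
variables `v = c * x`. -/
lemma sum_one_add_mul_rpow_le {β c : ℝ} (hβ : 1 < β) (hc : 0 < c) (n : ℕ) :
    ∑ k ∈ Finset.range n, (1 + c * ((k : ℝ) + 1)) ^ (-β) ≤
      c⁻¹ * ∫ v : ℝ, (1 + ‖v‖) ^ (-β) := by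
  have hint : MeasureTheory.Integrable fun v : ℝ => (1 + ‖v‖) ^ (-β) :=
    integrable_one_add_norm (by simpa using hβ)
  have hanti : AntitoneOn (fun x : ℝ => (1 + ‖c * x‖) ^ (-β)) (Set.Icc 0 (0 + (n : ℝ))) := by
    intro x hx y hy hxy
    have hx0 : 0 ≤ x := hx.1
    have hy0 : 0 ≤ y := hy.1
    have h1 : ‖c * x‖ ≤ ‖c * y‖ := by
      rw [Real.norm_of_nonneg (by positivity), Real.norm_of_nonneg (by positivity)]
      gcongr
    exact Real.rpow_le_rpow_of_nonpos (by positivity) (by linarith) (by linarith)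
  have h := hanti.sum_le_integral
  have h2 : ∑ k ∈ Finset.range n, (1 + c * ((k : ℝ) + 1)) ^ (-β) =
      ∑ i ∈ Finset.range n, (1 + ‖c * (0 + ((i + 1 : ℕ) : ℝ))‖) ^ (-β) := by
    refine Finset.sum_congr rfl fun k _ => ?_
    rw [Real.norm_of_nonneg (by positivity)]
    simp
  rw [h2]
  refine h.trans ?_
  rw [intervalIntegral.integral_comp_mul_left (fun v => (1 + ‖v‖) ^ (-β)) hc.ne', smul_eq_mul]
  gcongr
  rw [intervalIntegral.integral_of_le (by simp; positivity)]
  exact MeasureTheory.setIntegral_le_integral hint (.of_forall fun v => by positivity)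

/-- Each term of `df(t)` is dominated by a decreasing function of `c * (k + 1)`, since
`(1 + v) ^ β ≤ 2 ^ β * (1 + v ^ β)`. -/
lemma df_term_le {β c t x : ℝ} (hβ : 1 < β) (hc : 0 < c) (hx : 0 < x) (ht : c ^ β ≤ t) :
    x ^ (-β) / (x ^ (-β) + t) ≤ 2 ^ β * (1 + c * x) ^ (-β) := by
  have hv : 0 < c * x := by positivity
  have key : (1 + c * x) ^ β ≤ 2 ^ β * (1 + (c * x) ^ β) := by
    have hp : 0 < (c * x) ^ β := by positivity
    have h2 : (0 : ℝ) < 2 ^ β := by positivity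
    rcases le_total (c * x) 1 with h | h
    · have : (1 + c * x) ^ β ≤ 2 ^ β :=
        Real.rpow_le_rpow (by positivity) (by linarith) (by linarith)
      nlinarith
    · have : (1 + c * x) ^ β ≤ (2 * (c * x)) ^ β :=
        Real.rpow_le_rpow (by positivity) (by linarith) (by linarith)
      rw [Real.mul_rpow (by norm_num) hv.le] at this
      nlinarith
  rw [Real.mul_rpow hc.le hx.le] at key
  rw [Real.rpow_neg hx.le, Real.rpow_neg (by positivity)]
  have hxb : 0 < x ^ β := by positivity
  have hcb : 0 < c ^ β := by positivity
  have ht0 : 0 < t := hcb.trans_le ht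
  have hvb : 0 < (1 + c * x) ^ β := by positivity
  have e : (x ^ β)⁻¹ / ((x ^ β)⁻¹ + t) = 1 / (1 + t * x ^ β) := by
    field_simp
  rw [e, ← div_eq_mul_inv, div_le_div_iff₀ (by positivity) hvb, one_mul]
  refine key.trans ?_
  gcongr

lemma df_le_of_large {β : ℝ} (hβ : 1 < β) :
    ∃ m : ℝ, 0 < m ∧ ∀ T t : ℝ, 1 ≤ T → (m / T) ^ β ≤ t → powerLawDf β t ≤ T / 2 := by
  set I := ∫ v : ℝ, (1 + ‖v‖) ^ (-β) with hI
  have hI0 : 0 ≤ I := MeasureTheory.integral_nonneg fun v => by positivity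
  refine ⟨2 * (2 ^ β * I) + 1, by positivity, fun T t hT ht => ?_⟩
  set m := 2 * (2 ^ β * I) + 1 with hm
  have hm0 : 0 < m := by positivity
  have hc : 0 < m / T := by positivity
  have ht0 : 0 < t := lt_of_lt_of_le (by positivity) ht
  refine Real.tsum_le_of_sum_range_le (fun k => by positivity) fun n => ?_
  calc _ ≤ ∑ k ∈ Finset.range n, 2 ^ β * (1 + m / T * ((k : ℝ) + 1)) ^ (-β) :=
        Finset.sum_le_sum fun k _ => df_term_le hβ hc (by positivity) ht
    _ ≤ 2 ^ β * ((m / T)⁻¹ * I) := by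
        rw [← Finset.mul_sum]
        gcongr
        exact sum_one_add_mul_rpow_le hβ hc n
    _ = T * (2 ^ β * I) / m := by
        field_simp
    _ ≤ T / 2 := by
        rw [div_le_div_iff₀ hm0 (by norm_num)]
        nlinarith

/-- For the exact power-law spectrum `λ_k := k^{−β}` (`β > 1`,
indexed so that `lam k = (k+1)^{−β}`) and `df₁(t) := ∑_{k≥1} λ_k/(λ_k + t)`, let
`κ(λ, T)` be the unique positive solution of `κ − λ = κ df₁(κ)/T`. Then for any
fixed `ℓ ≥ 0` with `ℓ ≠ β` and `a > 0`, one has `κ(a T^{−ℓ}, T) ≍ T^{−min(ℓ,β)}`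
as `T → ∞`. -/
theorem powerLaw_kappa_asymptotics (β : ℝ) (hβ : 1 < β)
    (κfun : ℝ → ℝ → ℝ)
    (hκ : ∀ T : ℝ, 1 ≤ T → ∀ lam : ℝ, 0 < lam →
      0 < κfun lam T ∧
        κfun lam T - lam =
          κfun lam T *
            (∑' k : ℕ, (((k : ℝ) + 1) ^ (-β)) / (((k : ℝ) + 1) ^ (-β) + κfun lam T)) / T)
    (ℓ : ℝ) (hℓ : 0 ≤ ℓ) (hℓβ : ℓ ≠ β) (a : ℝ) (ha : 0 < a) :
    ∃ A B T₀ : ℝ, 0 < A ∧ A ≤ B ∧ 1 ≤ T₀ ∧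
      ∀ T : ℝ, T₀ ≤ T →
        A * T ^ (-min ℓ β) ≤ κfun (a * T ^ (-ℓ)) T ∧
          κfun (a * T ^ (-ℓ)) T ≤ B * T ^ (-min ℓ β) := by
  obtain ⟨m, hm0, hm⟩ := df_le_of_large hβ
  have hmb : 0 < m ^ β := by positivity
  refine ⟨min a (3 ^ (-β)), m ^ β + 2 * a, 1, by positivity, ?_, le_rfl, fun T hT => ?_⟩
  · have := min_le_left a ((3 : ℝ) ^ (-β))
    linarith
  have hT0 : 0 < T := by linarith
  have hlam : 0 < a * T ^ (-ℓ) := by positivity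
  obtain ⟨hpos, heq⟩ := hκ T hT _ hlam
  change _ = _ * powerLawDf β _ / T at heq
  set lam := a * T ^ (-ℓ) with hlamdef
  set κ := κfun lam T
  have hdf0 := powerLawDf_nonneg (β := β) hpos
  have hlow1 : lam ≤ κ := by
    have : 0 ≤ κ * powerLawDf β κ / T := by positivity
    linarith
  have hlow2 : (3 * T) ^ (-β) ≤ κ := by
    by_contra! hcon
    have h1 := le_df_of_small hβ hpos hT hcon.le
    have h2 : κ ≤ κ * powerLawDf β κ / T := by
      rw [le_div_iff₀ hT0]
      gcongr
    linarith
  have hup : κ ≤ (m / T) ^ β ∨ κ ≤ 2 * lam := by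
    refine or_iff_not_imp_left.2 fun h => ?_
    have h1 := hm T κ hT (not_le.1 h).le
    have h2 : κ * powerLawDf β κ / T ≤ κ / 2 := by
      rw [div_le_iff₀ hT0]
      nlinarith
    linarith
  have hTl : T ^ (-ℓ) ≤ T ^ (-min ℓ β) :=
    Real.rpow_le_rpow_of_exponent_le hT (neg_le_neg (min_le_left _ _))
  have hTb : T ^ (-β) ≤ T ^ (-min ℓ β) :=
    Real.rpow_le_rpow_of_exponent_le hT (neg_le_neg (min_le_right _ _))
  have hTm : 0 < T ^ (-min ℓ β) := by positivity
  constructor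
  · rcases le_total ℓ β with h | h
    · rw [min_eq_left h]
      refine le_trans ?_ hlow1
      rw [hlamdef]
      gcongr
      exact min_le_left _ _
    · rw [min_eq_right h]
      refine le_trans ?_ hlow2
      rw [Real.mul_rpow (by norm_num) hT0.le]
      gcongr
      exact min_le_right _ _
  · rcases hup with h | h
    · rw [Real.div_rpow hm0.le hT0.le, div_eq_mul_inv, ← Real.rpow_neg hT0.le] at h
      nlinarith
    · nlinarith

end
end
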